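/- Let m ≥ 1, n ≥ 1 be integers and μ ∈ ℝ. Then the rational function u_{m,n}(z) = (d/dz) ln( T_{m−1,n+1}^{(μ−1)}(z) / T_{m−1,n}^{(μ+1)}(z) ) = −T_{m,n}^{(μ)}(z) T_{m−2,n+1}^{(μ)}(z) / ( T_{m−1,n}^{(μ+1)}(z) T_{m−1,n+1}^{(μ−1)}(z) ) satisfies the second-order equation d²u/dz² = (1/2)(1/u + 1/(u−1))(du/dz)² − (1/z)(du/dz) + ((u−1)²κ₁² − u²κ₃²)/(2z²u(u−1)) + (κ₂−κ₄)u(u−1)/z + u(u−1)(2u−1)/2, with κ₁ = m, κ₃ = m+2n+μ+1 and κ₂−κ₄ = μ, at every z ≠ 0 where u is defined and u(z) ∉ {0, 1}. -/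

import Mathlib

noncomputable section

open Finset

/-- Generalized binomial coefficient `C(x, k)` for real `x`. -/
def genBinom (x : ℝ) (k : ℕ) : ℝ :=
  (∏ i ∈ Finset.range k, (x - i)) / (Nat.factorial k)

/-- Associated Laguerre polynomial `L_n^{(α)}(z)`, with the convention `L_n^{(α)} = 0` for `n < 0`. -/
def lagL (n : ℤ) (α : ℝ) : ℝ → ℝ := fun z =>
  if n < 0 then 0
  else ∑ k ∈ Finset.range (n.toNat + 1),
    (-1 : ℝ) ^ k * genBinom ((n : ℝ) + α) (n.toNat - k) * z ^ k / (Nat.factorial k)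

/-- Generalised Laguerre polynomial
`T_{m,n}^{(μ)}(z) = det[(d/dz)^{j+k} L_{m+n}^{(μ+1)}(z)]_{j,k=0}^{n-1}`
(with `T_{m,0}^{(μ)} = 1`, the empty determinant). -/
def genLag (m : ℤ) (n : ℕ) (μ : ℝ) : ℝ → ℝ := fun z =>
  Matrix.det (Matrix.of fun j k : Fin n =>
    iteratedDeriv ((j : ℕ) + (k : ℕ)) (lagL (m + n) (μ + 1)) z)

/-- Wronskian `Wr(f_1, …, f_r)(z) = det[(d/dz)^{j-1} f_k(z)]`. -/
def wronskian {r : ℕ} (f : Fin r → ℝ → ℝ) : ℝ → ℝ := fun z =>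
  Matrix.det (Matrix.of fun j k : Fin r => iteratedDeriv (j : ℕ) (f k) z)

/-- The constant `c_{m,n} = (-1)^{n(2m+1+n)/2} ∏_{j=1}^n (j-1)!/(m+j)!`. -/
def cmn (m n : ℕ) : ℝ :=
  (-1 : ℝ) ^ (n * (2 * m + 1 + n) / 2) *
    ∏ j ∈ Finset.range n, (Nat.factorial j : ℝ) / (Nat.factorial (m + j + 1))

/-- `τ_{m,n}^{(μ)}(z) = det[(z d/dz)^{j+k} L_{m+n}^{(n+μ)}(z)]_{j,k=0}^{n-1}`. -/
def tauP (m : ℤ) (n : ℕ) (μ : ℝ) : ℝ → ℝ := fun z =>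
  Matrix.det (Matrix.of fun j k : Fin n =>
    ((fun (g : ℝ → ℝ) => fun t => t * deriv g t)^[(j : ℕ) + (k : ℕ)]
      (lagL (m + n) ((n : ℝ) + μ))) z)

/-- Hirota bilinear operator `D_z(f • g) = f' g - f g'`. -/
def hirota (f g : ℝ → ℝ) (z : ℝ) : ℝ := deriv f z * g z - f z * deriv g z

/-- Probabilists' Hermite polynomial `He_n` as a real function. -/
def He (n : ℕ) : ℝ → ℝ := fun z => Polynomial.aeval z (Polynomial.hermite n)

/-- The fifth Painlevé equation (with `δ = -1/2`) for `w` with parameters `(a, b, c)`,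
holding at the point `z`. -/
def PV (a b c : ℝ) (w : ℝ → ℝ) (z : ℝ) : Prop :=
  iteratedDeriv 2 w z =
    (1 / (2 * w z) + 1 / (w z - 1)) * (deriv w z) ^ 2
      - (1 / z) * deriv w z
      + (w z - 1) ^ 2 * (a * (w z) ^ 2 + b) / (z ^ 2 * w z)
      + c * w z / z
      - w z * (w z + 1) / (2 * (w z - 1))

/-- The Jimbo–Miwa–Okamoto `σ`-equation `S_V` with parameters `(ν₁, ν₂, ν₃)`,
holding at the point `z`. -/
def SV (ν₁ ν₂ ν₃ : ℝ) (σ : ℝ → ℝ) (z : ℝ) : Prop :=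
  (z * iteratedDeriv 2 σ z) ^ 2 =
    (2 * (deriv σ z) ^ 2 + (ν₁ + ν₂ + ν₃ - z) * deriv σ z + σ z) ^ 2
      - 4 * deriv σ z * (deriv σ z + ν₁) * (deriv σ z + ν₂) * (deriv σ z + ν₃)

section OPS
open Polynomial

/-- Hankel determinant of the moments of a linear functional. -/
def Hk (L : ℝ[X] →ₗ[ℝ] ℝ) (n : ℕ) : ℝ :=
  Matrix.det (Matrix.of fun j k : Fin n => L (X ^ ((j : ℕ) + (k : ℕ))))

/-- `P` is the monic orthogonal polynomial of degree `n` for `L`. -/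
def IsOP (L : ℝ[X] →ₗ[ℝ] ℝ) (n : ℕ) (P : ℝ[X]) : Prop :=
  P.Monic ∧ P.natDegree = n ∧ ∀ k < n, L (P * X ^ k) = 0

/-- The functional twisted by the weight `x - t`. -/
def tw (L : ℝ[X] →ₗ[ℝ] ℝ) (t : ℝ) : ℝ[X] →ₗ[ℝ] ℝ :=
  L ∘ₗ LinearMap.mulLeft ℝ (X - C t)

lemma tw_apply (L : ℝ[X] →ₗ[ℝ] ℝ) (t : ℝ) (p : ℝ[X]) : tw L t p = L ((X - C t) * p) := rfl

lemma L_C_mul (L : ℝ[X] →ₗ[ℝ] ℝ) (c : ℝ) (p : ℝ[X]) : L (C c * p) = c * L p := by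
  rw [← smul_eq_C_mul, map_smul, smul_eq_mul]

lemma poly_sum_fin (n : ℕ) (q : ℝ[X]) (hq : q.degree < n) :
    q = ∑ i : Fin n, C (q.coeff i) * X ^ (i : ℕ) := by
  by_cases h0 : q = 0
  · simp [h0]
  conv_lhs => rw [q.as_sum_range' n ((natDegree_lt_iff_degree_lt h0).2 hq)]
  rw [Finset.sum_range]
  simp [C_mul_X_pow_eq_monomial]

lemma L_sum_fin (L : ℝ[X] →ₗ[ℝ] ℝ) (n : ℕ) (q r : ℝ[X]) (hq : q.degree < n) :
    L (q * r) = ∑ i : Fin n, q.coeff i * L (X ^ (i : ℕ) * r) := by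
  conv_lhs => rw [poly_sum_fin n q hq]
  rw [Finset.sum_mul, map_sum]
  refine Finset.sum_congr rfl fun i _ => ?_
  rw [mul_assoc, L_C_mul]

lemma IsOP.orth {L : ℝ[X] →ₗ[ℝ] ℝ} {n : ℕ} {P : ℝ[X]} (h : IsOP L n P) {q : ℝ[X]}
    (hq : q.degree < n) : L (P * q) = 0 := by
  rw [mul_comm, L_sum_fin L n q P hq]
  refine Finset.sum_eq_zero fun i _ => ?_
  rw [mul_comm (X ^ _), h.2.2 i i.2, mul_zero]

lemma nondeg {L : ℝ[X] →ₗ[ℝ] ℝ} {n : ℕ} (hD : Hk L n ≠ 0) {q : ℝ[X]} (hq : q.degree < n)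
    (h : ∀ k < n, L (q * X ^ k) = 0) : q = 0 := by
  have h1 : Matrix.vecMul (fun i : Fin n => q.coeff i)
      (Matrix.of fun j k : Fin n => L (X ^ ((j : ℕ) + (k : ℕ)))) = 0 := by
    funext k
    have := h k k.2
    rw [L_sum_fin L n q _ hq] at this
    simp only [Matrix.vecMul, dotProduct, Matrix.of_apply, Pi.zero_apply]
    rw [← this]
    simp [pow_add]
  have h2 := Matrix.eq_zero_of_vecMul_eq_zero hD h1
  rw [poly_sum_fin n q hq]
  refine Finset.sum_eq_zero fun i _ => ?_
  have := congrFun h2 i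
  simp only [Pi.zero_apply] at this
  simp [this]

lemma exists_OP {L : ℝ[X] →ₗ[ℝ] ℝ} {n : ℕ} (hD : Hk L n ≠ 0) : ∃ P, IsOP L n P := by
  set M : Matrix (Fin n) (Fin n) ℝ := Matrix.of fun j k : Fin n => L (X ^ ((j : ℕ) + (k : ℕ)))
    with hM
  have hu : IsUnit M := (Matrix.isUnit_iff_isUnit_det M).2 (isUnit_iff_ne_zero.2 hD)
  obtain ⟨c, hc⟩ := (Matrix.vecMul_surjective_iff_isUnit.2 hu) (fun k => - L (X ^ (n + (k : ℕ))))
  set q : ℝ[X] := ∑ i : Fin n, C (c i) * X ^ (i : ℕ) with hq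
  have hqd : q.degree < n := by
    rw [hq]
    refine lt_of_le_of_lt (degree_sum_le _ _) ?_
    rw [Finset.sup_lt_iff (by exact WithBot.bot_lt_coe n)]
    intro i _
    exact lt_of_le_of_lt (degree_C_mul_X_pow_le _ _) (by exact_mod_cast i.2)
  refine ⟨X ^ n + q, monic_X_pow_add (by simpa using hqd), ?_, ?_⟩
  · apply natDegree_eq_of_degree_eq_some
    rw [degree_add_eq_left_of_degree_lt (by simpa using hqd), degree_X_pow]
  · intro k hk
    have := congrFun hc ⟨k, hk⟩
    simp only [Matrix.vecMul, dotProduct, hM, Matrix.of_apply] at this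
    rw [add_mul, map_add, ← pow_add, hq, Finset.sum_mul, map_sum]
    have h2 : ∀ i : Fin n, L (C (c i) * X ^ (i : ℕ) * X ^ k) = c i * L (X ^ ((i : ℕ) + k)) := by
      intro i
      rw [mul_assoc, L_C_mul, pow_add]
    simp only [h2, this]
    ring

lemma IsOP.degree {L : ℝ[X] →ₗ[ℝ] ℝ} {n : ℕ} {P : ℝ[X]} (h : IsOP L n P) : P.degree = n := by
  rw [degree_eq_natDegree h.1.ne_zero, h.2.1]

lemma monic_sub_degree {n : ℕ} {P Q : ℝ[X]} (hP : P.Monic) (hPn : P.natDegree = n)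
    (hQ : Q.Monic) (hQn : Q.natDegree = n) : (P - Q).degree < n := by
  have := degree_sub_lt_left (p := P) (q := Q) (by
    rw [degree_eq_natDegree hP.ne_zero, degree_eq_natDegree hQ.ne_zero, hPn, hQn]) hP.ne_zero
    (by rw [hP.leadingCoeff, hQ.leadingCoeff])
  rwa [degree_eq_natDegree hP.ne_zero, hPn] at this

lemma IsOP.norm_eq {L : ℝ[X] →ₗ[ℝ] ℝ} {n : ℕ} {P Q : ℝ[X]} (h : IsOP L n P) (hQ : Q.Monic)
    (hQn : Q.natDegree = n) : L (P * Q) = L (P * P) := by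
  have := h.orth (monic_sub_degree hQ hQn h.1 h.2.1)
  rw [mul_sub, map_sub] at this
  linarith

lemma IsOP.unique {L : ℝ[X] →ₗ[ℝ] ℝ} {n : ℕ} {P Q : ℝ[X]} (hD : Hk L n ≠ 0) (h : IsOP L n P)
    (h' : IsOP L n Q) : P = Q := by
  have := nondeg hD (monic_sub_degree h.1 h.2.1 h'.1 h'.2.1) (fun k hk => by
    rw [sub_mul, map_sub, h.2.2 k hk, h'.2.2 k hk, sub_zero])
  exact sub_eq_zero.1 this

lemma OP_expand {L : ℝ[X] →ₗ[ℝ] ℝ} {n : ℕ} {P : ℝ[X]} (hP : P.Monic) (hPn : P.natDegree = n)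
    (r : ℝ[X]) :
    L (P * r) = L (X ^ n * r) + ∑ i : Fin n, P.coeff i * L (X ^ (i : ℕ) * r) := by
  have h := monic_sub_degree hP hPn (monic_X_pow n) (natDegree_X_pow n)
  have h2 := L_sum_fin L n _ r h
  rw [sub_mul, map_sub] at h2
  have h3 : ∀ i : Fin n, (P - X ^ n).coeff i = P.coeff i := by
    intro i
    rw [coeff_sub, coeff_X_pow, if_neg (by have := i.2; omega), sub_zero]
  simp only [h3] at h2
  linarith

lemma Hk_succ {L : ℝ[X] →ₗ[ℝ] ℝ} {n : ℕ} {P : ℝ[X]} (h : IsOP L n P) :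
    Hk L (n + 1) = L (P * P) * Hk L n := by
  set M : Matrix (Fin (n + 1)) (Fin (n + 1)) ℝ :=
    Matrix.of fun j k => L (X ^ ((j : ℕ) + (k : ℕ))) with hM
  have h1 := Matrix.det_updateRow_sum M (Fin.last n) (fun i => P.coeff i)
  have hlast : P.coeff n = 1 := by
    have := h.1.coeff_natDegree; rwa [h.2.1] at this
  have hrow : (∑ k : Fin (n + 1), P.coeff (k : ℕ) • M k) =
      fun k : Fin (n + 1) => if k = Fin.last n then L (P * P) else 0 := by
    funext k
    have e := OP_expand (L := L) h.1 h.2.1 (X ^ (k : ℕ))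
    rw [Finset.sum_apply, Fin.sum_univ_castSucc]
    simp only [Pi.smul_apply, hM, Matrix.of_apply, smul_eq_mul, Fin.val_castSucc, Fin.val_last,
      hlast, one_mul, pow_add] at e ⊢
    rw [add_comm, ← e]
    split_ifs with hk
    · subst hk
      exact h.norm_eq (monic_X_pow _) (natDegree_X_pow _)
    · exact h.2.2 _ (Fin.val_lt_last hk)
  simp only [Fin.val_last, hlast, one_smul] at h1
  rw [hrow] at h1
  have hH : Hk L (n + 1) = M.det := rfl
  rw [hH, ← h1, Matrix.det_succ_row _ (Fin.last n), Finset.sum_eq_single (Fin.last n)]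
  · have : ((M.updateRow (Fin.last n)
        fun k => if k = Fin.last n then L (P * P) else 0).submatrix (Fin.last n).succAbove
        (Fin.last n).succAbove).det = Hk L n := by
      unfold Hk
      congr 1
      ext j k
      simp [Matrix.updateRow_apply, hM, Fin.succAbove_last]
    rw [this]
    simp [Matrix.updateRow_self, ← two_mul]
  · intro b _ hb
    simp [Matrix.updateRow_self, hb]
  · simp

lemma Hk_zero (L : ℝ[X] →ₗ[ℝ] ℝ) : Hk L 0 = 1 := by simp [Hk]

lemma monic_Xsub_mul {n : ℕ} {K : ℝ[X]} (hP : K.Monic) (hPn : K.natDegree = n) (t : ℝ) :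
    ((X - C t) * K).Monic ∧ ((X - C t) * K).natDegree = n + 1 := by
  refine ⟨(monic_X_sub_C t).mul hP, ?_⟩
  rw [(monic_X_sub_C t).natDegree_mul hP, natDegree_X_sub_C, hPn, add_comm]

lemma christ {L : ℝ[X] →ₗ[ℝ] ℝ} {n : ℕ} {P P1 K : ℝ[X]} {t : ℝ} (hD : Hk L (n + 1) ≠ 0)
    (h : IsOP L n P) (h1 : IsOP L (n + 1) P1) (hK : IsOP (tw L t) n K) :
    ∃ ρ : ℝ, (X - C t) * K = P1 + C ρ * P ∧ L ((X - C t) * K * K) = ρ * L (P * P) := by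
  have hh : L (P * P) ≠ 0 := by
    intro h0
    rw [Hk_succ h, h0, zero_mul] at hD
    exact hD rfl
  obtain ⟨m1, m2⟩ := monic_Xsub_mul hK.1 hK.2.1 t
  have hPd : P.degree < ((n + 1 : ℕ) : WithBot ℕ) := by
    rw [h.degree]; exact_mod_cast Nat.lt_succ_self n
  set ρ : ℝ := L ((X - C t) * K * X ^ n) / L (P * P) with hρ
  have hq : (X - C t) * K - P1 - C ρ * P = 0 := by
    apply nondeg hD
    · refine lt_of_le_of_lt (degree_sub_le _ _) (max_lt (monic_sub_degree m1 m2 h1.1 h1.2.1) ?_)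
      refine lt_of_le_of_lt ?_ hPd
      by_cases h0 : ρ = 0
      · simp [h0]
      · rw [degree_C_mul h0]
    · intro k hk
      rw [sub_mul, sub_mul, map_sub, map_sub, h1.2.2 k hk, mul_assoc (C ρ), L_C_mul]
      rcases Nat.lt_succ_iff_lt_or_eq.1 hk with hk | hk
      · rw [h.2.2 k hk, mul_assoc, ← tw_apply, hK.2.2 k hk]; simp
      · subst hk
        rw [h.norm_eq (monic_X_pow _) (natDegree_X_pow _), hρ]
        field_simp
        ring
  have e : (X - C t) * K = P1 + C ρ * P := by linear_combination hq
  refine ⟨ρ, e, ?_⟩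
  rw [e, add_mul, map_add, mul_assoc, L_C_mul, h.norm_eq hK.1 hK.2.1, h1.orth, zero_add]
  rw [hK.degree]; exact_mod_cast Nat.lt_succ_self n

lemma Hk_tw {L : ℝ[X] →ₗ[ℝ] ℝ} {t : ℝ} (n : ℕ) (hD : ∀ k ≤ n, Hk L k ≠ 0)
    (hX : ∀ k < n, Hk (tw L t) k ≠ 0) (P : ℝ[X]) (hP : IsOP L n P) :
    Hk (tw L t) n = (-1) ^ n * P.eval t * Hk L n := by
  induction n generalizing P with
  | zero =>
    have : P = 1 := by
      have := eq_one_of_monic_natDegree_zero hP.1 hP.2.1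
      exact this
    simp [Hk_zero, this]
  | succ n ih =>
    obtain ⟨P0, h0⟩ := exists_OP (hD n (by omega))
    obtain ⟨K, hK⟩ := exists_OP (hX n (by omega))
    obtain ⟨ρ, e1, e2⟩ := christ (hD (n + 1) le_rfl) h0 hP hK
    have i := ih (fun k hk => hD k (by omega)) (fun k hk => hX k (by omega)) P0 h0
    have e3 := congrArg (Polynomial.eval t) e1
    simp at e3
    rw [Hk_succ hK, i, Hk_succ h0, tw_apply, ← mul_assoc (X - C t), e2]
    have : P.eval t = - (ρ * P0.eval t) := by linarith
    rw [this]
    ring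

end OPS
section OPS2
open Polynomial

lemma degree_C_mul_le' (a : ℝ) (p : ℝ[X]) : (C a * p).degree ≤ p.degree := by
  by_cases h0 : a = 0
  · simp [h0]
  · rw [degree_C_mul h0]

lemma nextCoeff_of_OP {P : ℝ[X]} {n : ℕ} (hn : P.natDegree = n + 1) : P.nextCoeff = P.coeff n := by
  rw [nextCoeff_of_natDegree_pos (by omega), hn]; rfl

/-- subleading coefficients under a Christoffel transformation -/
lemma christ_nextCoeff {L : ℝ[X] →ₗ[ℝ] ℝ} {n : ℕ} {P P1 K : ℝ[X]} {t ρ : ℝ}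
    (h : IsOP L n P) (h1 : IsOP L (n + 1) P1) (hK : IsOP (tw L t) n K)
    (e : (X - C t) * K = P1 + C ρ * P) : K.nextCoeff - t = P1.nextCoeff + ρ := by
  have h2 := (monic_X_sub_C t).nextCoeff_mul hK.1
  rw [nextCoeff_X_sub_C] at h2
  rw [nextCoeff_of_OP h1.2.1]
  have h3 := nextCoeff_of_OP (monic_Xsub_mul hK.1 hK.2.1 t).2
  rw [h2, e, coeff_add, coeff_C_mul] at h3
  have : P.coeff n = 1 := by have := h.1.coeff_natDegree; rwa [h.2.1] at this
  rw [this] at h3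
  linarith

lemma degree_lt_of_le_coeff {n : ℕ} {q : ℝ[X]} (h : q.degree ≤ n) (h0 : q.coeff n = 0) :
    q.degree < n := by
  refine lt_of_le_of_ne h fun h2 => ?_
  have := coeff_ne_zero_of_eq_degree h2
  exact this h0

lemma degree_lt_succ_iff_le {n : ℕ} {q : ℝ[X]} :
    q.degree < ((n + 1 : ℕ) : WithBot ℕ) ↔ q.degree ≤ n := by
  rw [degree_lt_iff_coeff_zero, degree_le_iff_coeff_zero]
  constructor
  · intro h m hm
    exact h m (by have : n < m := by exact_mod_cast hm
                  omega)
  · intro h m hm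
    exact h m (by exact_mod_cast hm)

lemma IsOP.coeff_top {L : ℝ[X] →ₗ[ℝ] ℝ} {n : ℕ} {P : ℝ[X]} (h : IsOP L n P) : P.coeff n = 1 := by
  have := h.1.coeff_natDegree; rwa [h.2.1] at this

lemma IsOP.natDegree_le {L : ℝ[X] →ₗ[ℝ] ℝ} {n : ℕ} {P : ℝ[X]} (h : IsOP L n P) :
    P.natDegree ≤ n := h.2.1.le

/-- the remainder in the three-term recurrence -/
lemma rem_degree {L : ℝ[X] →ₗ[ℝ] ℝ} {n : ℕ} {P P1 : ℝ[X]} (hn : 1 ≤ n)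
    (h : IsOP L n P) (h1 : IsOP L (n + 1) P1) :
    (X * P - P1 - C (P.nextCoeff - P1.nextCoeff) * P).degree < (n : WithBot ℕ) := by
  obtain ⟨m1, m2⟩ := monic_Xsub_mul h.1 h.2.1 0
  rw [C_0, sub_zero] at m1 m2
  apply degree_lt_of_le_coeff
  · refine (degree_sub_le _ _).trans (max_le ?_ ?_)
    · exact degree_lt_succ_iff_le.1 (monic_sub_degree m1 m2 h1.1 h1.2.1)
    · refine (degree_C_mul_le' _ _).trans h.degree.le
  · obtain ⟨l, rfl⟩ : ∃ l, n = l + 1 := ⟨n - 1, by omega⟩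
    rw [nextCoeff_of_OP h.2.1, nextCoeff_of_OP h1.2.1, coeff_sub, coeff_sub, coeff_X_mul,
      coeff_C_mul, h.coeff_top]
    ring

lemma alpha_eq {L : ℝ[X] →ₗ[ℝ] ℝ} {n : ℕ} {P P1 : ℝ[X]} (hn : 1 ≤ n)
    (h : IsOP L n P) (h1 : IsOP L (n + 1) P1) :
    L (X * P * P) = (P.nextCoeff - P1.nextCoeff) * L (P * P) := by
  have h2 := h.orth (rem_degree hn h h1)
  have e : P * (X * P - P1 - C (P.nextCoeff - P1.nextCoeff) * P) =
      X * P * P - P1 * P - C (P.nextCoeff - P1.nextCoeff) * (P * P) := by ring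
  rw [e, map_sub, map_sub, L_C_mul,
    h1.orth (q := P) (by rw [h.degree]; exact_mod_cast Nat.lt_succ_self n)] at h2
  linarith

/-- Riccati data: the recurrence coefficient of the twisted functional. -/
lemma alpha_tw {L : ℝ[X] →ₗ[ℝ] ℝ} {n : ℕ} {P P1 K K1 : ℝ[X]} {t ρ : ℝ} (hn : 1 ≤ n)
    (h : IsOP L n P) (h1 : IsOP L (n + 1) P1) (hK : IsOP (tw L t) n K)
    (hK1 : IsOP (tw L t) (n + 1) K1) (e : (X - C t) * K = P1 + C ρ * P)
    (e2 : L ((X - C t) * K * K) = ρ * L (P * P)) :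
    (K.nextCoeff - K1.nextCoeff - t) * (ρ * L (P * P)) = L (P1 * P1) + ρ ^ 2 * L (P * P) := by
  have a := alpha_eq hn hK hK1
  rw [tw_apply, tw_apply, ← mul_assoc (X - C t) K K, e2] at a
  have b : L ((X - C t) * (X * K * K)) =
      L ((P1 + C ρ * P) * (P1 + C ρ * P)) + t * L ((X - C t) * K * K) := by
    rw [← e, ← L_C_mul, ← map_add]
    congr 1
    ring
  have c : L ((P1 + C ρ * P) * (P1 + C ρ * P)) = L (P1 * P1) + ρ ^ 2 * L (P * P) := by
    have : (P1 + C ρ * P) * (P1 + C ρ * P) =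
      P1 * P1 + C (2 * ρ) * (P1 * P) + C (ρ ^ 2) * (P * P) := by
      simp only [C_mul, C_pow, C_ofNat]; ring
    rw [this, map_add, map_add, L_C_mul, L_C_mul,
      h1.orth (q := P) (by rw [h.degree]; exact_mod_cast Nat.lt_succ_self n)]
    ring
  rw [b, c, e2] at a
  linarith

/-- The Pearson relation of the Laguerre moment functional. -/
def Pearson (L : ℝ[X] →ₗ[ℝ] ℝ) (z μ N : ℝ) : Prop :=
  ∀ p : ℝ[X], L (X * (X - 1) * derivative p +
    (C z * X ^ 2 + C (μ + 1 - z) * X + C N) * p) = 0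

lemma Pearson.pow {L : ℝ[X] →ₗ[ℝ] ℝ} {z μ N : ℝ} (hL : Pearson L z μ N) (P : ℝ[X]) (k : ℕ) :
    L (X * (X - 1) * derivative P * X ^ k) =
      -(z * L (P * X ^ (k + 2)) + (μ + 1 - z + k) * L (P * X ^ (k + 1))
        + (N - k) * L (P * X ^ k)) := by
  have h := hL (P * X ^ k)
  have e : X * (X - 1) * derivative (P * X ^ k) +
      (C z * X ^ 2 + C (μ + 1 - z) * X + C N) * (P * X ^ k) =
      X * (X - 1) * derivative P * X ^ k + (C z * (P * X ^ (k + 2)) +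
        C (μ + 1 - z + k) * (P * X ^ (k + 1)) + C (N - k) * (P * X ^ k)) := by
    rw [derivative_mul, derivative_X_pow]
    have : (X : ℝ[X]) * (C (k : ℝ) * X ^ (k - 1)) = C (k : ℝ) * X ^ k := by
      rcases k with _ | k
      · simp
      · simp [pow_succ]; ring
    simp only [C_add, C_sub]
    linear_combination ((X : ℝ[X]) - 1) * P * this
  rw [e, map_add, map_add, map_add, L_C_mul, L_C_mul, L_C_mul] at h
  linarith

/-- structure relation for `P_{n+1}` -/
lemma struct_up {L : ℝ[X] →ₗ[ℝ] ℝ} {n : ℕ} {P P1 : ℝ[X]} {z μ N β : ℝ} (hL : Pearson L z μ N)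
    (hD : Hk L (n + 1) ≠ 0) (h : IsOP L n P) (h1 : IsOP L (n + 1) P1)
    (hβ : L (P1 * P1) = β * L (P * P)) :
    ∃ e : ℝ, X * (X - 1) * derivative P1 =
      (C ((n : ℝ) + 1) * X + C (z * β - P1.nextCoeff - (n + 1))) * P1
        + (C e - C (z * β) * X) * P := by
  have hh : L (P * P) ≠ 0 := by
    intro h0
    rw [Hk_succ h, h0, zero_mul] at hD
    exact hD rfl
  set c := z * β - P1.nextCoeff - ((n : ℝ) + 1) with hc
  set Q0 : ℝ[X] := X * (X - 1) * derivative P1 - (C ((n : ℝ) + 1) * X + C c) * P1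
    + C (z * β) * X * P with hQ0
  have hPP1 : ∀ k ≤ n, L (P1 * X ^ k) = 0 := fun k hk => h1.2.2 k (by omega)
  have hdeg : Q0.degree ≤ n := by
    rw [degree_le_iff_coeff_zero]
    intro j hj
    have hj' : n < j := by exact_mod_cast hj
    obtain ⟨i, rfl⟩ : ∃ i, j = i + 1 := ⟨j - 1, by omega⟩
    have e1 : Q0 = X * (X * derivative P1 - derivative P1 - C ((n : ℝ) + 1) * P1
        + C (z * β) * P) - C c * P1 := by rw [hQ0]; ring
    have e2 : (X * derivative P1).coeff i = i * P1.coeff i := by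
      rcases i with _ | i
      · simp
      · rw [coeff_X_mul, coeff_derivative]; push_cast; ring
    rw [e1, coeff_sub, coeff_X_mul, coeff_add, coeff_sub, coeff_sub, e2, coeff_derivative,
      coeff_C_mul, coeff_C_mul, coeff_C_mul]
    rcases Nat.lt_or_ge n i with hi | hi
    · have q1 : P1.coeff (i + 1) = 0 :=
        coeff_eq_zero_of_natDegree_lt (by rw [h1.2.1]; omega)
      have q2 : P.coeff i = 0 := coeff_eq_zero_of_natDegree_lt (by rw [h.2.1]; omega)
      rw [q1, q2]
      rcases Nat.lt_or_ge (n + 1) i with hi2 | hi2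
      · rw [coeff_eq_zero_of_natDegree_lt (by rw [h1.2.1]; omega)]; ring
      · have : i = n + 1 := by omega
        subst this
        push_cast; ring
    · have : i = n := by omega
      subst this
      rw [h.coeff_top, h1.coeff_top, hc, nextCoeff_of_OP h1.2.1]
      ring
  set e : ℝ := L (Q0 * X ^ n) / L (P * P) with he
  refine ⟨e, ?_⟩
  have hq : Q0 - C e * P = 0 := by
    apply nondeg hD
    · refine degree_lt_succ_iff_le.2 ((degree_sub_le _ _).trans (max_le hdeg ?_))
      exact (degree_C_mul_le' _ _).trans h.degree.le
    · intro k hk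
      rw [sub_mul, map_sub, mul_assoc (C e), L_C_mul]
      rcases Nat.lt_succ_iff_lt_or_eq.1 hk with hk | hk
      · have e1 : Q0 * X ^ k = X * (X - 1) * derivative P1 * X ^ k
          - (C ((n : ℝ) + 1) * (P1 * X ^ (k + 1)) + C c * (P1 * X ^ k))
          + C (z * β) * (P * X ^ (k + 1)) := by rw [hQ0]; ring
        rw [h.2.2 k hk, e1, map_add, map_sub, map_add, L_C_mul, L_C_mul, L_C_mul, hL.pow,
          hPP1 k hk.le, hPP1 (k + 1) hk]
        rcases Nat.lt_or_ge (k + 1) n with hk2 | hk2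
        · rw [h.2.2 _ hk2, hPP1 (k + 2) (by omega)]; ring
        · have : n = k + 1 := by omega
          subst this
          rw [h1.norm_eq (monic_X_pow _) (natDegree_X_pow _),
            h.norm_eq (monic_X_pow _) (natDegree_X_pow _), hβ]
          ring
      · subst hk
        rw [h.norm_eq (monic_X_pow _) (natDegree_X_pow _), he]
        field_simp
        ring
  rw [hQ0] at hq
  linear_combination hq

end OPS2
section OPS3
open Polynomial

lemma coeff_X_mul_derivative (p : ℝ[X]) (i : ℕ) :
    (X * derivative p).coeff i = i * p.coeff i := by
  rcases i with _ | i
  · simp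
  · rw [coeff_X_mul, coeff_derivative]; push_cast; ring

/-- structure relation for `P_n`, written with `P_{n+1}` -/
lemma struct_down {L : ℝ[X] →ₗ[ℝ] ℝ} {n : ℕ} {P P1 : ℝ[X]} {z μ N β α d : ℝ} (hn : 1 ≤ n)
    (hL : Pearson L z μ N)
    (hD : Hk L n ≠ 0) (hD1 : Hk L (n + 1) ≠ 0) (h : IsOP L n P) (h1 : IsOP L (n + 1) P1)
    (hβ : L (P1 * P1) = β * L (P * P)) (hα : α = P.nextCoeff - P1.nextCoeff)
    (hd : d = z - (2 * n + μ) - z * α) :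
    X * (X - 1) * derivative P =
      (C (z - n - μ) * X - C z * X ^ 2 + C (-N - 1 - (z * β - P1.nextCoeff - (n + 1)))) * P
        + (C z * X - C d) * P1 := by
  have hh : L (P * P) ≠ 0 := by
    intro h0
    rw [Hk_succ h, h0, zero_mul] at hD1
    exact hD1 rfl
  obtain ⟨l, rfl⟩ : ∃ l, n = l + 1 := ⟨n - 1, by omega⟩
  have hRd := rem_degree hn h h1
  rw [← hα] at hRd
  set R : ℝ[X] := X * P - P1 - C α * P with hR
  have hP1 : P1 = X * P - R - C α * P := by rw [hR]; ring
  have hRc : ∀ i, l < i → R.coeff i = 0 := by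
    intro i hi
    exact (degree_lt_iff_coeff_zero _ _).1 hRd i (by omega)
  set b := R.coeff l with hb
  set p := P.nextCoeff with hp
  have hpc : P.coeff l = p := by rw [hp, nextCoeff_of_OP h.2.1]
  set e : ℝ := -p - ((l + 1 : ℕ) : ℝ) + z * b - d * α with he
  set Q : ℝ[X] := X * (X - 1) * derivative P - ((C (z - (l + 1 : ℕ) - μ) * X - C z * X ^ 2 + C e) * P
        + (C z * X - C d) * P1) with hQ
  have hPo : ∀ k ≤ l, L (P * X ^ k) = 0 := fun k hk => h.2.2 k (by omega)
  have hP1o : ∀ k ≤ l + 1, L (P1 * X ^ k) = 0 := fun k hk => h1.2.2 k (by omega)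
  have hQdeg : Q.degree < ((l + 1 : ℕ) : WithBot ℕ) := by
    rw [degree_lt_iff_coeff_zero]
    intro j hj
    obtain ⟨i, rfl⟩ : ∃ i, j = i + 1 := ⟨j - 1, by omega⟩
    have e1 : Q = X * (X * derivative P - derivative P
        - C (((l + 1 : ℕ) : ℝ)) * P + C z * R) - C (e + d * α) * P - C d * R := by
      have hd' : C (z - ((l + 1 : ℕ) : ℝ) - μ) = C z * C α + C d + C (((l + 1 : ℕ) : ℝ)) := by
        rw [← C_mul, ← C_add, ← C_add, hd]; congr 1; ring
      rw [hQ, hP1, hd', C_add, C_mul]; ring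
    rw [e1, coeff_sub, coeff_sub, coeff_X_mul, coeff_add, coeff_sub, coeff_sub,
      coeff_X_mul_derivative, coeff_derivative, coeff_C_mul, coeff_C_mul, coeff_C_mul, coeff_C_mul,
      hRc (i + 1) (by omega)]
    rcases Nat.lt_or_ge l i with hi | hi
    · have q1 : P.coeff (i + 1) = 0 :=
        coeff_eq_zero_of_natDegree_lt (by rw [h.2.1]; omega)
      rw [q1, hRc i hi]
      rcases Nat.lt_or_ge (l + 1) i with hi2 | hi2
      · rw [coeff_eq_zero_of_natDegree_lt (by rw [h.2.1]; omega)]; ring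
      · have : i = l + 1 := by omega
        subst this
        push_cast; ring
    · have : i = l := by omega
      subst this
      rw [h.coeff_top, hpc, he]
      push_cast
      ring
  have hQ0 : Q = 0 := by
    apply nondeg hD hQdeg
    intro k hk
    have e1 : Q * X ^ k = X * (X - 1) * derivative P * X ^ k
        - C (z - (l + 1 : ℕ) - μ) * (P * X ^ (k + 1)) + C z * (P * X ^ (k + 2))
        - C e * (P * X ^ k) - C z * (P1 * X ^ (k + 1)) + C d * (P1 * X ^ k) := by
      rw [hQ]; ring
    rw [e1, map_add, map_sub, map_sub, map_add, map_sub, L_C_mul, L_C_mul, L_C_mul, L_C_mul,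
      L_C_mul, hL.pow, hPo k (by omega), hP1o k (by omega), hP1o (k + 1) (by omega)]
    rcases Nat.lt_or_ge k l with hk2 | hk2
    · rw [hPo (k + 1) (by omega)]; ring
    · have : k = l := by omega
      subst this
      push_cast; ring
  have hS : L (X * P * (X * P)) = L (P1 * P1) + α ^ 2 * L (P * P) + b * L (P * P) := by
    have a1 := alpha_eq hn h h1
    rw [← hα] at a1
    have a2 : L (X * P * (X * P)) = L (P1 * (X * P)) + α * L (X * P * P) + L (P * (X * R)) := by
      rw [← L_C_mul, ← map_add, ← map_add]; congr 1; rw [hP1]; ring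
    obtain ⟨m1, m2⟩ := monic_Xsub_mul h.1 h.2.1 0
    rw [C_0, sub_zero] at m1 m2
    have a3 : L (P * (X * R)) = b * L (P * P) := by
      have : L (P * (X * R - C b * X ^ (l + 1))) = 0 := by
        apply h.orth
        rw [degree_lt_iff_coeff_zero]
        intro j hj
        obtain ⟨i, rfl⟩ : ∃ i, j = i + 1 := ⟨j - 1, by omega⟩
        rw [coeff_sub, coeff_X_mul, coeff_C_mul, coeff_X_pow]
        rcases Nat.lt_or_ge l i with hi | hi
        · rw [hRc i hi, if_neg (by omega)]; ring
        · have : i = l := by omega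
          subst this
          rw [if_pos rfl, hb]; ring
      rw [mul_sub, map_sub, mul_left_comm P (C b), L_C_mul,
        h.norm_eq (monic_X_pow _) (natDegree_X_pow _)] at this
      linarith
    rw [a2, h1.norm_eq m1 m2, a1, a3]; ring
  have hI : L (X * (X - 1) * derivative P * P) = - (1 / 2) * (z * L (X * P * (X * P))
      + (μ + 1 - z) * L (X * P * P) + N * L (P * P)) := by
    have := hL (P * P)
    have e1 : X * (X - 1) * derivative (P * P) +
        (C z * X ^ 2 + C (μ + 1 - z) * X + C N) * (P * P) =
        C 2 * (X * (X - 1) * derivative P * P) + C z * (X * P * (X * P))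
          + C (μ + 1 - z) * (X * P * P) + C N * (P * P) := by
      rw [derivative_mul, C_ofNat]; ring
    rw [e1, map_add, map_add, map_add, L_C_mul, L_C_mul, L_C_mul, L_C_mul] at this
    linarith
  have hII : L (X * (X - 1) * derivative P * P) = (z - (l + 1 : ℕ) - μ) * L (X * P * P)
      - z * L (X * P * (X * P)) + e * L (P * P) + z * L (P1 * P1) := by
    have e1 : X * (X - 1) * derivative P * P = C (z - (l + 1 : ℕ) - μ) * (X * P * P)
        - C z * (X * P * (X * P)) + C e * (P * P) + C z * (P1 * (X * P)) - C d * (P1 * P)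
        + Q * P := by rw [hQ]; ring
    obtain ⟨m1, m2⟩ := monic_Xsub_mul h.1 h.2.1 0
    rw [C_0, sub_zero] at m1 m2
    rw [e1, hQ0, zero_mul, add_zero, map_sub, map_add, map_add, map_sub, L_C_mul, L_C_mul,
      L_C_mul, L_C_mul, L_C_mul, h1.norm_eq m1 m2,
      h1.orth (q := P) (by rw [h.degree]; exact_mod_cast Nat.lt_succ_self _)]
    ring
  have a1 := alpha_eq hn h h1
  rw [← hα] at a1
  have hfin : e = -N - 1 - (z * β - P1.nextCoeff - (((l + 1 : ℕ) : ℝ) + 1)) := by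
    have h3 : P1.nextCoeff = p - α := by rw [hα]; ring
    rw [h3]
    rw [hII, hS, a1, hβ] at hI
    have hI' : ((z - (l + 1 : ℕ) - μ) * α - z * (β + α ^ 2 + b) + e + z * β) =
       - (1 / 2) * (z * (β + α ^ 2 + b) + (μ + 1 - z) * α + N) := by
      apply mul_right_cancel₀ hh
      linear_combination hI
    rw [hd] at he
    linear_combination 2 * hI' - he
  rw [← hfin]
  rw [hQ] at hQ0
  linear_combination hQ0

/-- Everything needed from the orthogonal polynomials, at a fixed point. -/
lemma core_point {L : ℝ[X] →ₗ[ℝ] ℝ} {n : ℕ} {P P1 K0 K01 K1 K11 : ℝ[X]} {z μ N : ℝ} (hn : 1 ≤ n)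
    (hL : Pearson L z μ N)
    (hD : ∀ k ≤ n + 1, Hk L k ≠ 0)
    (hX : ∀ k ≤ n + 1, Hk (tw L 0) k ≠ 0) (hY : ∀ k ≤ n + 1, Hk (tw L 1) k ≠ 0)
    (hB : ∀ k ≤ n, Hk (tw (tw L 0) 1) k ≠ 0)
    (h : IsOP L n P) (h1 : IsOP L (n + 1) P1)
    (hK0 : IsOP (tw L 0) n K0) (hK01 : IsOP (tw L 0) (n + 1) K01)
    (hK1 : IsOP (tw L 1) n K1) (hK11 : IsOP (tw L 1) (n + 1) K11) :
    ∃ r0 r1 β c e d α : ℝ,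
      α = P.nextCoeff - P1.nextCoeff ∧
      Hk (tw L 0) (n + 1) * Hk L n = - r0 * Hk (tw L 0) n * Hk L (n + 1) ∧
      Hk (tw L 1) (n + 1) * Hk L n = - r1 * Hk (tw L 1) n * Hk L (n + 1) ∧
      K0.nextCoeff = P1.nextCoeff - r0 ∧
      K1.nextCoeff - 1 = P1.nextCoeff - r1 ∧
      r0 * (K0.nextCoeff - K01.nextCoeff + r0) = -β ∧
      r1 * (K1.nextCoeff - K11.nextCoeff - 1 + r1) = -β ∧
      Hk L (n + 1) * Hk (tw (tw L 0) 1) n =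
        Hk (tw L 0) (n + 1) * Hk (tw L 1) n - Hk (tw L 0) n * Hk (tw L 1) (n + 1) ∧
      c * r0 = - e ∧ (n + 1 + c) * r1 = z * β - e ∧ d * r0 = -N - 1 - c ∧
      (d - z) * r1 = -N - μ - n - 1 - c ∧ z * α = z - 2 * n - μ - d := by
  have hDn1 := hD (n + 1) le_rfl
  have hDn := hD n (by omega)
  have hh : L (P * P) ≠ 0 := by
    intro h0
    rw [Hk_succ h, h0, zero_mul] at hDn1
    exact hDn1 rfl
  obtain ⟨ρ0, a1, a2⟩ := christ hDn1 h h1 hK0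
  obtain ⟨ρ1, b1, b2⟩ := christ hDn1 h h1 hK1
  have A := alpha_tw hn h h1 hK0 hK01 a1 a2
  have B := alpha_tw hn h h1 hK1 hK11 b1 b2
  have Ac := christ_nextCoeff h h1 hK0 a1
  have Bc := christ_nextCoeff h h1 hK1 b1
  have hβ : L (P1 * P1) = (L (P1 * P1) / L (P * P)) * L (P * P) := by field_simp
  set β := L (P1 * P1) / L (P * P) with hβd
  obtain ⟨e, se⟩ := struct_up hL hDn1 h h1 hβ
  set α := P.nextCoeff - P1.nextCoeff with hα
  have sd := struct_down hn hL hDn hDn1 h h1 hβ hα (rfl : z - (2 * n + μ) - z * α = _)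
  have tX := Hk_tw (t := 0) n (fun k hk => hD k (by omega)) (fun k hk => hX k (by omega)) P h
  have tX1 := Hk_tw (t := 0) (n + 1) (fun k hk => hD k (by omega)) (fun k hk => hX k (by omega)) P1 h1
  have tY := Hk_tw (t := 1) n (fun k hk => hD k (by omega)) (fun k hk => hY k (by omega)) P h
  have tY1 := Hk_tw (t := 1) (n + 1) (fun k hk => hD k (by omega)) (fun k hk => hY k (by omega)) P1 h1
  have tB := Hk_tw (L := tw L 0) (t := 1) n (fun k hk => hX k (by omega))
    (fun k hk => hB k (by omega)) K0 hK0
  have p0 : P.eval 0 ≠ 0 := by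
    intro h0; apply hX n (by omega); rw [tX, h0]; ring
  have p1 : P.eval 1 ≠ 0 := by
    intro h0; apply hY n (by omega); rw [tY, h0]; ring
  have v0 := congrArg (Polynomial.eval 0) a1
  have v1 := congrArg (Polynomial.eval 1) b1
  have v2 := congrArg (Polynomial.eval 1) a1
  have s0 := congrArg (Polynomial.eval 0) se
  have s1 := congrArg (Polynomial.eval 1) se
  have s2 := congrArg (Polynomial.eval 0) sd
  have s3 := congrArg (Polynomial.eval 1) sd
  simp only [eval_add, eval_sub, eval_mul, eval_X, eval_C, eval_one, eval_pow, C_0, eval_zero,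
    sub_zero, zero_mul, mul_zero, sub_self, zero_add, mul_one, one_mul, one_pow, zero_sub,
    ne_eq, OfNat.ofNat_ne_zero, not_false_eq_true, zero_pow] at v0 v1 v2 s0 s1 s2 s3
  have w0 : P1.eval 0 = -ρ0 * P.eval 0 := by linarith
  have w1 : P1.eval 1 = -ρ1 * P.eval 1 := by linarith
  refine ⟨-ρ0, -ρ1, β, z * β - P1.nextCoeff - (n + 1), e, z - (2 * n + μ) - z * α, α, rfl, ?_, ?_, ?_, ?_, ?_, ?_, ?_,
    ?_, ?_, ?_, ?_, ?_⟩
  rotate_right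
  · ring
  · rw [tX, tX1, w0]; ring
  · rw [tY, tY1, w1]; ring
  · linarith
  · linarith
  · apply mul_right_cancel₀ hh
    linear_combination -A - hβ
  · apply mul_right_cancel₀ hh
    linear_combination -B - hβ
  · rw [tB, v2, tX, tX1, tY, tY1, w0, w1]; ring
  · apply mul_right_cancel₀ p0
    rw [w0] at s0
    linear_combination -s0
  · apply mul_right_cancel₀ p1
    rw [w1] at s1
    linear_combination -s1
  · apply mul_right_cancel₀ p0
    rw [w0] at s2
    linear_combination s2
  · apply mul_right_cancel₀ p1
    rw [w1] at s3
    linear_combination s3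

end OPS3
section HANKEL
open Polynomial

/-- The moment functional whose moments are the derivatives of `G` at `z`. -/
def Lz (G : ℝ[X]) (z : ℝ) : ℝ[X] →ₗ[ℝ] ℝ :=
  (leval z) ∘ₗ (LinearMap.applyₗ G : Module.End ℝ ℝ[X] →ₗ[ℝ] ℝ[X]) ∘ₗ
    (aeval (derivative : Module.End ℝ ℝ[X])).toLinearMap

lemma Lz_apply (G : ℝ[X]) (z : ℝ) (p : ℝ[X]) :
    Lz G z p = eval z ((aeval (derivative : Module.End ℝ ℝ[X]) p) G) := rfl

lemma Lz_pow (G : ℝ[X]) (z : ℝ) (k : ℕ) : Lz G z (X ^ k) = eval z (derivative^[k] G) := by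
  rw [Lz_apply, map_pow, aeval_X, Module.End.pow_apply]

lemma tw_Lz (G : ℝ[X]) (z t : ℝ) : tw (Lz G z) t = Lz (derivative G - C t * G) z := by
  refine LinearMap.ext fun p => ?_
  rw [tw_apply, mul_comm, Lz_apply, Lz_apply, map_mul, Module.End.mul_apply, map_sub, aeval_X,
    aeval_C, LinearMap.sub_apply, Module.algebraMap_end_apply, smul_eq_C_mul]

/-- Hankel determinant of derivatives. -/
def Hpoly (n : ℕ) (G : ℝ[X]) : ℝ[X] :=
  Matrix.det (Matrix.of fun j k : Fin n => derivative^[(j : ℕ) + (k : ℕ)] G)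

lemma Hpoly_eval (n : ℕ) (G : ℝ[X]) (z : ℝ) : (Hpoly n G).eval z = Hk (Lz G z) n := by
  rw [Hpoly, ← coe_evalRingHom, RingHom.map_det, Hk]
  congr 1
  ext j k
  simp [Lz_pow]

lemma derivative_det {n : ℕ} (M : Matrix (Fin n) (Fin n) ℝ[X]) :
    derivative M.det = ∑ i, (M.updateCol i fun j => derivative (M j i)).det := by
  simp only [Matrix.det_apply', map_sum]
  rw [Finset.sum_comm]
  refine Finset.sum_congr rfl fun σ _ => ?_
  have hs : ((((Equiv.Perm.sign σ : ℤˣ) : ℤ)) : ℝ[X]) = C (((Equiv.Perm.sign σ : ℤˣ) : ℤ) : ℝ) := by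
    simp
  rw [hs, derivative_C_mul, derivative_prod_finset, Finset.mul_sum]
  refine Finset.sum_congr rfl fun i _ => ?_
  congr 1
  rw [← Finset.prod_erase_mul _ _ (Finset.mem_univ i)]
  congr 1
  · refine Finset.prod_congr rfl fun b hb => ?_
    rw [Matrix.updateCol_ne (Finset.ne_of_mem_erase hb)]
  · rw [Matrix.updateCol_self]

lemma Hpoly_derivative {n : ℕ} {G P : ℝ[X]} {z : ℝ} (h : IsOP (Lz G z) n P) :
    (derivative (Hpoly n G)).eval z = - P.nextCoeff * (Hpoly n G).eval z := by
  rcases n with _ | l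
  · have : P.nextCoeff = 0 := by simp [nextCoeff, h.2.1]
    simp [Hpoly, this]
  rw [Hpoly, derivative_det, Finset.sum_eq_single (Fin.last l)]
  rotate_left
  · intro i _ hi
    have hi2 : (i : ℕ) + 1 < l + 1 := by
      have := Fin.val_lt_last hi
      omega
    refine Matrix.det_zero_of_column_eq (i := i) (j := ⟨(i : ℕ) + 1, hi2⟩)
      (by simp [Fin.ext_iff]) fun k => ?_
    rw [Matrix.updateCol_self, Matrix.updateCol_ne (by simp [Fin.ext_iff])]
    simp only [Matrix.of_apply]
    rw [← add_assoc, Function.iterate_succ_apply']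
  · simp
  rw [← coe_evalRingHom, RingHom.map_det, RingHom.map_det]
  set M := (evalRingHom z).mapMatrix
    (Matrix.of fun j k : Fin (l + 1) => derivative^[(j : ℕ) + (k : ℕ)] G) with hM
  have hMe : ∀ j k : Fin (l + 1), M j k = Lz G z (X ^ ((j : ℕ) + (k : ℕ))) := by
    intro j k; simp [hM, Lz_pow]
  have h2 : (evalRingHom z).mapMatrix ((Matrix.of fun j k : Fin (l + 1) =>
      derivative^[(j : ℕ) + (k : ℕ)] G).updateCol (Fin.last l) fun j =>
      derivative ((Matrix.of fun j k : Fin (l + 1) =>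
        derivative^[(j : ℕ) + (k : ℕ)] G) j (Fin.last l))) =
      M.updateCol (Fin.last l) fun k => ∑ i : Fin (l + 1), (- P.coeff i) • M k i := by
    ext j k
    by_cases hk : k = Fin.last l
    · subst hk
      rw [Matrix.updateCol_self, RingHom.mapMatrix_apply, Matrix.map_apply, Matrix.updateCol_self]
      simp only [Matrix.of_apply, hMe, smul_eq_mul, neg_mul, Finset.sum_neg_distrib,
        coe_evalRingHom]
      rw [← Function.iterate_succ_apply' derivative, ← Lz_pow]
      have e := OP_expand (L := Lz G z) h.1 h.2.1 (X ^ (j : ℕ))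
      rw [h.2.2 j j.2] at e
      simp only [← pow_add] at e
      have e2 : (l + 1 + (j : ℕ)) = ((j : ℕ) + (Fin.last l : ℕ)).succ := by simp; omega
      rw [e2] at e
      simp only [add_comm] at e ⊢
      linarith
    · rw [Matrix.updateCol_ne hk, RingHom.mapMatrix_apply, Matrix.map_apply,
        Matrix.updateCol_ne hk]
      simp [hMe, Lz_pow]
  rw [h2, Matrix.det_updateCol_sum, nextCoeff_of_OP h.2.1]
  simp

lemma coeff_det_top {n : ℕ} (N : ℕ) (M : Matrix (Fin n) (Fin n) ℝ[X])
    (h : ∀ i j, (M i j).natDegree ≤ N) :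
    M.det.coeff (n * N) = (Matrix.of fun i j => (M i j).coeff N).det := by
  simp only [Matrix.det_apply', finsetSum_coeff]
  refine Finset.sum_congr rfl fun σ _ => ?_
  have hs : ((((Equiv.Perm.sign σ : ℤˣ) : ℤ)) : ℝ[X]) = C (((Equiv.Perm.sign σ : ℤˣ) : ℤ) : ℝ) := by
    simp
  rw [hs, coeff_C_mul]
  congr 1
  have := coeff_prod_of_natDegree_le (s := Finset.univ) (fun i => M (σ i) i) N (fun i _ => h _ _)
  simpa using this

lemma det_descFactorial {n N : ℕ} (hn : n ≤ N + 1) :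
    (Matrix.of fun j k : Fin n => ((N.descFactorial ((j : ℕ) + (k : ℕ)) : ℕ) : ℝ)).det ≠ 0 := by
  have e : (Matrix.of fun j k : Fin n => ((N.descFactorial ((j : ℕ) + (k : ℕ)) : ℕ) : ℝ)) =
      Matrix.of fun j k : Fin n => (N.descFactorial (j : ℕ) : ℝ) *
        (Matrix.of fun j k : Fin n => eval (((N - (j : ℕ) : ℕ)) : ℝ) (descPochhammer ℝ (k : ℕ))) j k := by
    ext j k
    simp only [Matrix.of_apply]
    rw [descPochhammer_eval_eq_descFactorial, ← Nat.cast_mul,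
      ← Nat.descFactorial_mul_descFactorial (Nat.le_add_right (j : ℕ) (k : ℕ)),
      Nat.add_sub_cancel_left, mul_comm]
  rw [e, Matrix.det_mul_column, ← Matrix.det_eval_matrixOfPolynomials_eq_det_vandermonde
    (fun j : Fin n => (((N - (j : ℕ) : ℕ)) : ℝ)) (fun k : Fin n => descPochhammer ℝ (k : ℕ))
    (fun i => descPochhammer_natDegree ℝ i) (fun i => monic_descPochhammer ℝ i)]
  refine mul_ne_zero (Finset.prod_ne_zero_iff.2 fun j _ => ?_)
    (Matrix.det_vandermonde_ne_zero_iff.2 ?_)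
  · have := j.2
    have h0 : N.descFactorial (j : ℕ) ≠ 0 := by
      rw [Ne, Nat.descFactorial_eq_zero_iff_lt]; omega
    exact_mod_cast h0
  · intro a b hab
    have hab' : N - (a : ℕ) = N - (b : ℕ) := Nat.cast_injective (R := ℝ) hab
    have := a.2
    have := b.2
    exact Fin.ext (by omega)

lemma Hpoly_ne_zero {n N : ℕ} {G : ℝ[X]} (hG : G ≠ 0) (hN : G.natDegree = N) (hn : n ≤ N + 1) :
    Hpoly n G ≠ 0 := by
  intro h0
  set M : Matrix (Fin n) (Fin n) ℝ[X] := Matrix.of fun j k : Fin n =>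
    X ^ (j : ℕ) * (Matrix.of fun j k : Fin n => X ^ (k : ℕ) *
      (Matrix.of fun j k : Fin n => derivative^[(j : ℕ) + (k : ℕ)] G) j k) j k with hM
  have hM0 : M.det = 0 := by
    rw [hM, Matrix.det_mul_column, Matrix.det_mul_row]
    rw [Hpoly] at h0
    rw [h0]; simp
  have hMe : ∀ j k, M j k = X ^ ((j : ℕ) + (k : ℕ)) * derivative^[(j : ℕ) + (k : ℕ)] G := by
    intro j k; simp only [hM, Matrix.of_apply, pow_add, mul_assoc]
  have h1 := coeff_det_top N M (fun j k => by
    rw [hMe]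
    rcases Nat.lt_or_ge N ((j : ℕ) + (k : ℕ)) with hlt | hge
    · rw [iterate_derivative_eq_zero (by omega)]; simp
    · refine natDegree_mul_le.trans ?_
      have := natDegree_iterate_derivative G ((j : ℕ) + (k : ℕ))
      rw [natDegree_X_pow]
      omega)
  rw [hM0, coeff_zero] at h1
  have h2 : (Matrix.of fun i j => (M i j).coeff N) = G.leadingCoeff •
      (Matrix.of fun j k : Fin n => ((N.descFactorial ((j : ℕ) + (k : ℕ)) : ℕ) : ℝ)) := by
    ext j k
    simp only [Matrix.of_apply, Matrix.smul_apply, smul_eq_mul]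
    rw [hMe, coeff_X_pow_mul']
    split_ifs with hle
    · rw [coeff_iterate_derivative, Nat.sub_add_cancel hle, nsmul_eq_mul, leadingCoeff, hN,
        mul_comm]
    · rw [Nat.descFactorial_eq_zero_iff_lt.2 (by omega)]; simp
  rw [h2, Matrix.det_smul] at h1
  have := mul_ne_zero (pow_ne_zero (Fintype.card (Fin n)) (leadingCoeff_ne_zero.2 hG))
    (det_descFactorial hn)
  exact this h1.symm

end HANKEL
section LAGUERRE
open Polynomial

lemma genBinom_zero (x : ℝ) : genBinom x 0 = 1 := by simp [genBinom]

lemma genBinom_succ (x : ℝ) (j : ℕ) : genBinom x (j + 1) * (j + 1) = genBinom x j * (x - j) := by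
  have h1 : ((j.factorial : ℕ) : ℝ) ≠ 0 := by exact_mod_cast Nat.factorial_ne_zero j
  have h2 : ((j : ℝ) + 1) ≠ 0 := by positivity
  rw [genBinom, genBinom, Finset.prod_range_succ, Nat.factorial_succ]
  push_cast
  field_simp

lemma genBinom_shift (x : ℝ) (j : ℕ) : genBinom (x + 1) (j + 1) * (j + 1) = genBinom x j * (x + 1) := by
  have h1 : ((j.factorial : ℕ) : ℝ) ≠ 0 := by exact_mod_cast Nat.factorial_ne_zero j
  have h2 : ((j : ℝ) + 1) ≠ 0 := by positivity
  have h3 : ∀ i ∈ Finset.range j, (x + 1 - ((i + 1 : ℕ) : ℝ)) = x - i := by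
    intro i _; push_cast; ring
  rw [genBinom, genBinom, Finset.prod_range_succ', Nat.factorial_succ, Finset.prod_congr rfl h3]
  push_cast
  field_simp
  simp

lemma genBinom_pascal (x : ℝ) (j : ℕ) :
    genBinom (x + 1) (j + 1) = genBinom x (j + 1) + genBinom x j := by
  have h2 : ((j : ℝ) + 1) ≠ 0 := by positivity
  apply mul_right_cancel₀ h2
  rw [genBinom_shift, add_mul, genBinom_succ]; ring

/-- The Laguerre polynomial as a polynomial. -/
def lagP (N : ℕ) (a : ℝ) : ℝ[X] :=
  ∑ k ∈ Finset.range (N + 1),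
    monomial k ((-1 : ℝ) ^ k * genBinom ((N : ℝ) + a) (N - k) / (Nat.factorial k))

lemma lagP_coeff (N : ℕ) (a : ℝ) (k : ℕ) : (lagP N a).coeff k =
    if k ≤ N then (-1 : ℝ) ^ k * genBinom ((N : ℝ) + a) (N - k) / (Nat.factorial k) else 0 := by
  rw [lagP, finsetSum_coeff]
  simp only [coeff_monomial, Finset.sum_ite_eq', Finset.mem_range, Nat.lt_succ_iff]

lemma lagL_eq (N : ℕ) (a : ℝ) : lagL (N : ℤ) a = fun z => (lagP N a).eval z := by
  funext z
  rw [lagL, if_neg (by omega), lagP, eval_finsetSum]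
  simp only [Int.toNat_natCast, eval_monomial, Int.cast_natCast]
  refine Finset.sum_congr rfl fun k _ => ?_
  ring

lemma lagP_derivative (M : ℕ) (a : ℝ) : derivative (lagP (M + 1) a) = - lagP M (a + 1) := by
  ext k
  rw [coeff_derivative, coeff_neg, lagP_coeff, lagP_coeff]
  by_cases hk : k ≤ M
  · rw [if_pos (by omega), if_pos hk, Nat.add_sub_add_right, Nat.factorial_succ]
    have h1 : ((k.factorial : ℕ) : ℝ) ≠ 0 := by exact_mod_cast Nat.factorial_ne_zero k
    have h2 : ((k : ℝ) + 1) ≠ 0 := by positivity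
    have h3 : ((M + 1 : ℕ) : ℝ) + a = M + (a + 1) := by push_cast; ring
    rw [h3]
    push_cast
    field_simp
    ring
  · rw [if_neg (by omega), if_neg hk]; simp

lemma lagP_sub (N : ℕ) (a : ℝ) : lagP N a - derivative (lagP N a) = lagP N (a + 1) := by
  ext k
  rw [coeff_sub, coeff_derivative, lagP_coeff, lagP_coeff, lagP_coeff]
  have h3 : (N : ℝ) + (a + 1) = N + a + 1 := by ring
  rcases Nat.lt_trichotomy k N with hk | hk | hk
  · rw [if_pos hk.le, if_pos (by omega), if_pos hk.le, Nat.factorial_succ, h3]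
    obtain ⟨j, hj⟩ : ∃ j, N - k = j + 1 := ⟨N - k - 1, by omega⟩
    have hj2 : N - (k + 1) = j := by omega
    rw [hj, hj2, genBinom_pascal]
    have h1 : ((k.factorial : ℕ) : ℝ) ≠ 0 := by exact_mod_cast Nat.factorial_ne_zero k
    have h2 : ((k : ℝ) + 1) ≠ 0 := by positivity
    push_cast
    field_simp
    ring
  · subst hk
    rw [if_pos le_rfl, if_neg (by omega), if_pos le_rfl, Nat.sub_self, genBinom_zero,
      genBinom_zero]
    ring
  · rw [if_neg (by omega), if_neg (by omega), if_neg (by omega)]; ring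

lemma lagP_ode (N : ℕ) (a : ℝ) :
    X * derivative^[2] (lagP N a) + (C (a + 1) - X) * derivative (lagP N a) + C (N : ℝ) * lagP N a
      = 0 := by
  ext k
  rw [sub_mul, Function.iterate_succ_apply', Function.iterate_one, coeff_add, coeff_add, coeff_sub,
    coeff_X_mul_derivative,
    coeff_X_mul_derivative, coeff_C_mul, coeff_C_mul, coeff_derivative, coeff_zero,
    lagP_coeff, lagP_coeff]
  rcases Nat.lt_trichotomy k N with hk | hk | hk
  · rw [if_pos hk.le, if_pos (by omega), Nat.factorial_succ]
    obtain ⟨j, hj⟩ : ∃ j, N - k = j + 1 := ⟨N - k - 1, by omega⟩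
    have hj2 : N - (k + 1) = j := by omega
    have hN : (N : ℝ) = j + 1 + k := by
      have : N = j + 1 + k := by omega
      rw [this]; push_cast; ring
    have hs := genBinom_succ ((N : ℝ) + a) j
    rw [hj, hj2]
    have h1 : ((k.factorial : ℕ) : ℝ) ≠ 0 := by exact_mod_cast Nat.factorial_ne_zero k
    have h2 : ((k : ℝ) + 1) ≠ 0 := by positivity
    push_cast
    field_simp
    rw [hN] at hs ⊢
    have h4 : (-1 : ℝ) ^ (k + 1) = - (-1 : ℝ) ^ k := by ring
    rw [h4]
    linear_combination (-1 : ℝ) ^ k * hs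
  · subst hk
    rw [if_pos le_rfl, if_neg (by omega)]; ring
  · rw [if_neg (by omega), if_neg (by omega)]; ring

lemma lagP_coeff_top (N : ℕ) (a : ℝ) : (lagP N a).coeff N ≠ 0 := by
  rw [lagP_coeff, if_pos le_rfl, Nat.sub_self, genBinom_zero]
  have h1 : ((N.factorial : ℕ) : ℝ) ≠ 0 := by exact_mod_cast Nat.factorial_ne_zero N
  have : (-1 : ℝ) ^ N ≠ 0 := pow_ne_zero _ (by norm_num)
  simp [h1]

lemma lagP_ne (N : ℕ) (a : ℝ) : lagP N a ≠ 0 := by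
  intro h
  apply lagP_coeff_top N a
  rw [h, coeff_zero]

lemma lagP_natDegree (N : ℕ) (a : ℝ) : (lagP N a).natDegree = N := by
  apply natDegree_eq_of_le_of_coeff_ne_zero _ (lagP_coeff_top N a)
  rw [natDegree_le_iff_coeff_eq_zero]
  intro k hk
  rw [lagP_coeff, if_neg (by omega)]

lemma ode_iter {F : ℝ[X]} {a N : ℝ}
    (h : X * derivative^[2] F + (C (a + 1) - X) * derivative F + C N * F = 0) (k : ℕ) :
    X * derivative^[k + 2] F + (C (a + 1 + k) - X) * derivative^[k + 1] F
      + C (N - k) * derivative^[k] F = 0 := by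
  induction k with
  | zero => simpa using h
  | succ k ih =>
    have := congrArg derivative ih
    simp only [derivative_add, derivative_mul, derivative_sub, derivative_C, derivative_X,
      ← Function.iterate_succ_apply' (derivative : ℝ[X] → ℝ[X]), derivative_zero] at this
    simp only [Nat.succ_eq_add_one] at this
    have e : k + 1 + 2 = k + 2 + 1 := by ring
    have e2 : k + 1 + 1 = k + 2 := by ring
    rw [e, e2]
    rw [e2] at this
    push_cast
    simp only [C_add, C_sub, C_1] at this ⊢
    linear_combination this

lemma Pearson_lag {F : ℝ[X]} {a N : ℝ}
    (h : X * derivative^[2] F + (C (a + 1) - X) * derivative F + C N * F = 0) (z : ℝ) :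
    Pearson (Lz F z) z a N := by
  intro p
  induction p using Polynomial.induction_on' with
  | add p q hp hq =>
    rw [← add_zero (0 : ℝ)]
    nth_rw 1 [← hp]
    rw [← hq, ← map_add]
    congr 1
    rw [derivative_add]; ring
  | monomial k c =>
    have e : X * (X - 1) * derivative (monomial k c) +
        (C z * X ^ 2 + C (a + 1 - z) * X + C N) * monomial k c =
        C c * (C z * X ^ (k + 2) + C (a + 1 + k - z) * X ^ (k + 1) + C (N - k) * X ^ k) := by
      rw [← C_mul_X_pow_eq_monomial, derivative_C_mul, derivative_X_pow]
      have : (X : ℝ[X]) * (C (k : ℝ) * X ^ (k - 1)) = C (k : ℝ) * X ^ k := by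
        rcases k with _ | k
        · simp
        · simp [pow_succ]; ring
      simp only [C_add, C_sub]
      linear_combination ((X : ℝ[X]) - 1) * C c * this
    rw [e, L_C_mul, map_add, map_add, L_C_mul, L_C_mul, L_C_mul, Lz_pow, Lz_pow, Lz_pow]
    have := congrArg (eval z) (ode_iter h k)
    simp only [eval_add, eval_sub, eval_mul, eval_X, eval_C, eval_zero] at this
    linear_combination c * this

lemma iteratedDeriv_poly (p : ℝ[X]) (k : ℕ) :
    iteratedDeriv k (fun z => p.eval z) = fun z => (derivative^[k] p).eval z := by
  induction k with
  | zero => simp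
  | succ k ih =>
    rw [iteratedDeriv_succ, ih]
    funext z
    rw [Polynomial.deriv, Function.iterate_succ_apply']

lemma genLag_eq (i : ℤ) (n N : ℕ) (a : ℝ) (h : i + (n : ℤ) = N) :
    genLag i n a = fun z => (Hpoly n (lagP N (a + 1))).eval z := by
  funext z
  rw [genLag, h, lagL_eq]
  rw [Hpoly, ← coe_evalRingHom, RingHom.map_det]
  congr 1
  ext j k
  simp [iteratedDeriv_poly]

lemma Hpoly_neg (n : ℕ) (G : ℝ[X]) : Hpoly n (-G) = (-1) ^ n * Hpoly n G := by
  have : (Matrix.of fun j k : Fin n => derivative^[(j : ℕ) + (k : ℕ)] (-G)) =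
      - (Matrix.of fun j k : Fin n => derivative^[(j : ℕ) + (k : ℕ)] G) := by
    ext1 j k
    simp only [Matrix.of_apply, Matrix.neg_apply, iterate_derivative_neg]
  rw [Hpoly, this, Matrix.det_neg, Fintype.card_fin, Hpoly]

end LAGUERRE
section FINAL
open Polynomial

/-- The first order system, as an algebraic consequence of the relations at a point. -/
lemma alg_sys {p p1 k0 k01 k1 k11 r0 r1 β c e d α z μ N n u s b : ℝ} (hs : s ≠ 0)
    (h0 : r0 = u * s) (h1 : r1 = (u - 1) * s)
    (hb : -p1 + b = - u * (k01 + k1) + (u - 1) * (k0 + k11))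
    (a1 : α = p - p1) (a2 : k0 = p1 - r0) (a3 : k1 - 1 = p1 - r1)
    (a4 : r0 * (k0 - k01 + r0) = -β) (a5 : r1 * (k1 - k11 - 1 + r1) = -β)
    (a6 : c * r0 = -e) (a7 : (n + 1 + c) * r1 = z * β - e) (a8 : d * r0 = -N - 1 - c)
    (a9 : (d - z) * r1 = -N - μ - n - 1 - c) (a10 : z * α = z - 2 * n - μ - d) :
    b = -p1 - u ∧
    z * (u * (-k01 - k1 + p1 - b)) =
      z * (u * (u - 1)) * (1 + 2 * s) - (μ + 2 * n + 1) * u - (N - n) ∧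
    z * (s * (-p + b + k0 + k1)) =
      - z * (2 * u - 1) * (s ^ 2 + s) + (2 * n + μ) * s + μ + n := by
  have hk1 : k1 = p1 - r1 + 1 := by linarith
  subst hk1 a2
  subst h0 h1
  have hb' : b = -p1 - u := by
    apply mul_left_cancel₀ hs
    linear_combination s * hb + a4 - a5
  subst hb'
  have hds : d * s = μ + n - z * (u - 1) * s := by linear_combination a8 - a9
  have hc : c = -N - 1 - d * (u * s) := by linear_combination a8
  have hβ : z * β = (n + 1) * ((u - 1) * s) - c * s := by linear_combination a6 - a7
  refine ⟨rfl, ?_, ?_⟩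
  · apply mul_left_cancel₀ hs
    have hβ2 : z * β = s * ((n + 1) * (u - 1) + N + 1 + u * (d * s)) := by
      rw [hβ, hc]; ring
    rw [hds] at hβ2
    linear_combination z * a4 - hβ2
  · have : p = α + p1 := by linarith
    subst this
    linear_combination -s * a10 + hds

/-- Elimination of `s` from the first order system. -/
lemma alg_elim {z u u1 u2 s s1 κ m μ n : ℝ} (hκ : κ = μ + 2 * n + 1)
    (hg : z * u1 = z * (u * (u - 1)) * (1 + 2 * s) - κ * u - m)
    (hs : z * s1 = - z * (2 * u - 1) * (s ^ 2 + s) + (2 * n + μ) * s + μ + n)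
    (hd : u1 + z * u2 = (u * (u - 1)) * (1 + 2 * s)
      + z * ((2 * u - 1) * u1 * (1 + 2 * s) + u * (u - 1) * (2 * s1)) - κ * u1) :
    2 * z ^ 2 * (u * (u - 1)) * u2 = z ^ 2 * (2 * u - 1) * u1 ^ 2 - 2 * z * (u * (u - 1)) * u1
      + ((u - 1) ^ 2 * m ^ 2 - u ^ 2 * (m + κ) ^ 2) + 2 * z * μ * (u * (u - 1)) ^ 2
      + z ^ 2 * (u * (u - 1)) ^ 2 * (2 * u - 1) := by
  subst hκ
  linear_combination 2 * z * (u * (u - 1)) * hd + 4 * z * (u * (u - 1)) ^ 2 * hs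
    - (2 * (μ + 2 * n + 1) * (u * (u - 1)) + 2 * z * (2 * u - 1) * u1
      - (2 * u - 1) * (z * (u * (u - 1)) * (1 + 2 * s) + z * u1 + (μ + 2 * n + 1) * u + m)) * hg

lemma exists_bound {W : ℝ[X]} (hW : W ≠ 0) : ∃ R : ℝ, 0 < R ∧ ∀ z, R < z → W.eval z ≠ 0 := by
  obtain ⟨R, hR⟩ := W.roots.toFinset.bddAbove
  refine ⟨max R 1, by positivity, fun z hz h0 => ?_⟩
  have : z ∈ W.roots.toFinset := by simp [hW, h0]
  have := hR this
  have := le_max_left R 1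
  linarith

lemma poly_eq_of_large {p q : ℝ[X]} {R : ℝ} (h : ∀ z, R < z → p.eval z = q.eval z) : p = q :=
  eq_of_infinite_eval_eq p q ((Set.Ioi_infinite R).mono fun z hz => h z hz)

lemma hasDeriv_ratio (P Q : ℝ[X]) {z : ℝ} (hQ : Q.eval z ≠ 0) :
    HasDerivAt (fun t => P.eval t / Q.eval t)
      ((derivative P * Q - P * derivative Q).eval z / (Q.eval z) ^ 2) z := by
  have := (P.hasDerivAt z).div (Q.hasDerivAt z) hQ
  rw [eval_sub, eval_mul, eval_mul]
  exact this

/-- First order system at a point where all the determinants are nonzero. -/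
lemma sys_point {F : ℝ[X]} {n : ℕ} {μ N z : ℝ} (hn : 1 ≤ n)
    (hF : X * derivative^[2] F + (C (μ + 1) - X) * derivative F + C N * F = 0)
    {D0 D1 X0 X1 Y0 Y1 B : ℝ[X]}
    (eD0 : D0 = Hpoly n F) (eD1 : D1 = Hpoly (n + 1) F)
    (eX0 : X0 = Hpoly n (derivative F)) (eX1 : X1 = Hpoly (n + 1) (derivative F))
    (eY0 : Y0 = Hpoly n (derivative F - F)) (eY1 : Y1 = Hpoly (n + 1) (derivative F - F))
    (eB : B = Hpoly n (derivative (derivative F) - derivative F))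
    (hD : ∀ k ≤ n + 1, (Hpoly k F).eval z ≠ 0)
    (hX : ∀ k ≤ n + 1, (Hpoly k (derivative F)).eval z ≠ 0)
    (hY : ∀ k ≤ n + 1, (Hpoly k (derivative F - F)).eval z ≠ 0)
    (hB : ∀ k ≤ n, (Hpoly k (derivative (derivative F) - derivative F)).eval z ≠ 0) :
    (D1 * B).eval z = (X1 * Y0 - X0 * Y1).eval z ∧
    (derivative (D1 * B) = derivative (X1 * Y0 - X0 * Y1) →
      (derivative D1 * B - D1 * derivative B).eval z = (X1 * Y0).eval z ∧
      ∃ u s u1 s1 : ℝ, u = (X1 * Y0).eval z / (D1 * B).eval z ∧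
        s = (-(D0 * B)).eval z / (X0 * Y0).eval z ∧
        u1 = (derivative (X1 * Y0) * (D1 * B) - (X1 * Y0) * derivative (D1 * B)).eval z /
          ((D1 * B).eval z) ^ 2 ∧
        s1 = (derivative (-(D0 * B)) * (X0 * Y0) - (-(D0 * B)) * derivative (X0 * Y0)).eval z /
          ((X0 * Y0).eval z) ^ 2 ∧
        z * u1 = z * (u * (u - 1)) * (1 + 2 * s) - (μ + 2 * n + 1) * u - (N - n) ∧
        z * s1 = - z * (2 * u - 1) * (s ^ 2 + s) + (2 * n + μ) * s + μ + n) := by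
  have t0 : tw (Lz F z) 0 = Lz (derivative F) z := by rw [tw_Lz]; simp
  have t1 : tw (Lz F z) 1 = Lz (derivative F - F) z := by rw [tw_Lz]; simp
  have t2 : tw (tw (Lz F z) 0) 1 = Lz (derivative (derivative F) - derivative F) z := by
    rw [t0, tw_Lz]; simp
  obtain ⟨P, h⟩ := exists_OP (L := Lz F z) (n := n) (by rw [← Hpoly_eval]; exact hD _ (by omega))
  obtain ⟨P1, h1⟩ := exists_OP (L := Lz F z) (n := n + 1)
    (by rw [← Hpoly_eval]; exact hD _ (by omega))
  obtain ⟨K0, hK0⟩ := exists_OP (L := Lz (derivative F) z) (n := n)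
    (by rw [← Hpoly_eval]; exact hX _ (by omega))
  obtain ⟨K01, hK01⟩ := exists_OP (L := Lz (derivative F) z) (n := n + 1)
    (by rw [← Hpoly_eval]; exact hX _ (by omega))
  obtain ⟨K1, hK1⟩ := exists_OP (L := Lz (derivative F - F) z) (n := n)
    (by rw [← Hpoly_eval]; exact hY _ (by omega))
  obtain ⟨K11, hK11⟩ := exists_OP (L := Lz (derivative F - F) z) (n := n + 1)
    (by rw [← Hpoly_eval]; exact hY _ (by omega))
  have core := core_point (K0 := K0) (K01 := K01) (K1 := K1) (K11 := K11) hn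
    (Pearson_lag hF z) (fun k hk => by rw [← Hpoly_eval]; exact hD k hk)
    (fun k hk => by rw [t0, ← Hpoly_eval]; exact hX k hk)
    (fun k hk => by rw [t1, ← Hpoly_eval]; exact hY k hk)
    (fun k hk => by rw [t2, ← Hpoly_eval]; exact hB k hk) h h1 (by rw [t0]; exact hK0)
    (by rw [t0]; exact hK01) (by rw [t1]; exact hK1) (by rw [t1]; exact hK11)
  rw [t2, t0, t1] at core
  simp only [← Hpoly_eval, ← eD0, ← eD1, ← eX0, ← eX1, ← eY0, ← eY1, ← eB] at core
  obtain ⟨r0, r1, β, c, e, d, α, a1, b1, b2, a2, a3, a4, a5, b3, a6, a7, a8, a9, a10⟩ := core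
  have d0 := Hpoly_derivative h
  have d1 := Hpoly_derivative h1
  have x0 := Hpoly_derivative hK0
  have x1 := Hpoly_derivative hK01
  have y0 := Hpoly_derivative hK1
  have y1 := Hpoly_derivative hK11
  rw [← eD0] at d0
  rw [← eD1] at d1
  rw [← eX0] at x0
  rw [← eX1] at x1
  rw [← eY0] at y0
  rw [← eY1] at y1
  have nD0 : D0.eval z ≠ 0 := by rw [eD0]; exact hD _ (by omega)
  have nD1 : D1.eval z ≠ 0 := by rw [eD1]; exact hD _ (by omega)
  have nX0 : X0.eval z ≠ 0 := by rw [eX0]; exact hX _ (by omega)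
  have nY0 : Y0.eval z ≠ 0 := by rw [eY0]; exact hY _ (by omega)
  have nB : B.eval z ≠ 0 := by rw [eB]; exact hB _ (by omega)
  refine ⟨by simpa only [eval_mul, eval_sub] using b3, fun hder => ?_⟩
  have hder' := congrArg (eval z) hder
  simp only [derivative_mul, derivative_sub, eval_mul, eval_sub, eval_add] at hder'
  rw [d1, x0, x1, y0, y1] at hder'
  simp only [derivative_mul, derivative_neg, eval_mul, eval_sub, eval_add, eval_neg]
  rw [d0, d1, x0, x1, y0]
  generalize D0.eval z = D0 at *
  generalize D1.eval z = D1 at *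
  generalize X0.eval z = X0 at *
  generalize X1.eval z = X1 at *
  generalize Y0.eval z = Y0 at *
  generalize Y1.eval z = Y1 at *
  obtain ⟨b, hb⟩ : ∃ b, (derivative B).eval z = b * B.eval z :=
    ⟨(derivative B).eval z / B.eval z, by field_simp⟩
  rw [hb] at hder' ⊢
  generalize B.eval z = B at *
  obtain ⟨u, hu⟩ : ∃ u, u = X1 * Y0 / (D1 * B) := ⟨_, rfl⟩
  obtain ⟨s, hs⟩ : ∃ s, s = -(D0 * B) / (X0 * Y0) := ⟨_, rfl⟩
  have hu' : X1 * Y0 = u * (D1 * B) := by rw [hu]; field_simp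
  have hu2 : X0 * Y1 = (u - 1) * (D1 * B) := by linear_combination b3 + hu'
  have hs' : -(D0 * B) = s * (X0 * Y0) := by rw [hs]; field_simp
  have hs0 : s ≠ 0 := by
    rw [hs]; exact div_ne_zero (neg_ne_zero.2 (mul_ne_zero nD0 nB)) (mul_ne_zero nX0 nY0)
  have hDB := mul_ne_zero nD1 nB
  have hXY := mul_ne_zero nX0 nY0
  have h0 : r0 = u * s := by
    apply mul_right_cancel₀ (mul_ne_zero nD1 hXY)
    linear_combination Y0 * b1 - D0 * hu' + u * D1 * hs'
  have h1' : r1 = (u - 1) * s := by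
    apply mul_right_cancel₀ (mul_ne_zero nD1 hXY)
    linear_combination X0 * b2 - D0 * hu2 + (u - 1) * D1 * hs'
  have hbb : -P1.nextCoeff + b = - u * (K01.nextCoeff + K1.nextCoeff)
      + (u - 1) * (K0.nextCoeff + K11.nextCoeff) := by
    apply mul_right_cancel₀ hDB
    linear_combination hder' - (K01.nextCoeff + K1.nextCoeff) * hu'
      + (K0.nextCoeff + K11.nextCoeff) * hu2
  obtain ⟨q1, q2, q3⟩ := alg_sys hs0 h0 h1' hbb a1 a2 a3 a4 a5 a6 a7 a8 a9 a10
  refine ⟨?_, u, s, u * (-K01.nextCoeff - K1.nextCoeff + P1.nextCoeff - b),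
    s * (-P.nextCoeff + b + K0.nextCoeff + K1.nextCoeff), hu, hs, ?_, ?_, q2, q3⟩
  · rw [hu', q1]; ring
  · rw [hu]; field_simp; ring
  · rw [hs]; field_simp; ring

end FINAL
section FINAL2
open Polynomial

lemma ratio_second (P Q : ℝ[X]) {z : ℝ} (hQ : Q.eval z ≠ 0) :
    HasDerivAt (fun t => (derivative P * Q - P * derivative Q).eval t / (Q.eval t) ^ 2)
      ((derivative (derivative P * Q - P * derivative Q) * Q -
        2 * (derivative P * Q - P * derivative Q) * derivative Q).eval z / (Q.eval z) ^ 3) z := by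
  have hQ2 : (Q ^ 2).eval z ≠ 0 := by rw [eval_pow]; exact pow_ne_zero _ hQ
  have h := hasDeriv_ratio (derivative P * Q - P * derivative Q) (Q ^ 2) hQ2
  generalize derivative P * Q - P * derivative Q = N at *
  simp only [eval_pow] at h
  convert h using 1
  simp only [eval_sub, eval_mul, eval_pow, derivative_pow, eval_C, eval_ofNat]
  field_simp
  norm_num
  try ring

/-- the polynomial form of the differential equation -/
lemma ode_poly_eval {z m k μ p q n1 n2 : ℝ} (hq : q ≠ 0) :
    (2 * z ^ 2 * (p / q * (p / q - 1)) * (n2 / q ^ 3) = z ^ 2 * (2 * (p / q) - 1) * (n1 / q ^ 2) ^ 2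
      - 2 * z * (p / q * (p / q - 1)) * (n1 / q ^ 2)
      + ((p / q - 1) ^ 2 * m ^ 2 - (p / q) ^ 2 * k ^ 2) + 2 * z * μ * (p / q * (p / q - 1)) ^ 2
      + z ^ 2 * (p / q * (p / q - 1)) ^ 2 * (2 * (p / q) - 1)) ↔
    (2 * z ^ 2 * p * (p - q) * n2 = z ^ 2 * (2 * p - q) * n1 ^ 2 - 2 * z * p * (p - q) * n1 * q
      + ((p - q) ^ 2 * m ^ 2 - p ^ 2 * k ^ 2) * q ^ 3 + 2 * z * μ * p ^ 2 * (p - q) ^ 2 * q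
      + z ^ 2 * p ^ 2 * (p - q) ^ 2 * (2 * p - q)) := by
  have h5 : q ^ 5 ≠ 0 := pow_ne_zero _ hq
  rw [← sub_eq_zero, ← sub_eq_zero (b := z ^ 2 * (2 * p - q) * n1 ^ 2 - _ + _ + _ + _)]
  rw [← mul_left_inj' h5, zero_mul]
  have : ∀ a b : ℝ, a = b → (a = 0 ↔ b = 0) := by rintro a b rfl; rfl
  apply this
  field_simp

lemma poly_main {F : ℝ[X]} {n : ℕ} {μ m : ℝ} (hn : 1 ≤ n)
    (hF : X * derivative^[2] F + (C (μ + 1) - X) * derivative F + C (m + n) * F = 0)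
    {D0 D1 X0 X1 Y0 Y1 B : ℝ[X]}
    (eD0 : D0 = Hpoly n F) (eD1 : D1 = Hpoly (n + 1) F)
    (eX0 : X0 = Hpoly n (derivative F)) (eX1 : X1 = Hpoly (n + 1) (derivative F))
    (eY0 : Y0 = Hpoly n (derivative F - F)) (eY1 : Y1 = Hpoly (n + 1) (derivative F - F))
    (eB : B = Hpoly n (derivative (derivative F) - derivative F))
    (hD : ∀ k ≤ n + 1, Hpoly k F ≠ 0)
    (hX : ∀ k ≤ n + 1, Hpoly k (derivative F) ≠ 0)
    (hY : ∀ k ≤ n + 1, Hpoly k (derivative F - F) ≠ 0)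
    (hB : ∀ k ≤ n, Hpoly k (derivative (derivative F) - derivative F) ≠ 0)
    {P Q N1 N2 : ℝ[X]} (eP : P = X1 * Y0) (eQ : Q = D1 * B)
    (eN1 : N1 = derivative P * Q - P * derivative Q)
    (eN2 : N2 = derivative N1 * Q - 2 * N1 * derivative Q) :
    derivative D1 * B - D1 * derivative B = P ∧
    2 * X ^ 2 * P * (P - Q) * N2 = X ^ 2 * (2 * P - Q) * N1 ^ 2 - 2 * X * P * (P - Q) * N1 * Q
      + ((P - Q) ^ 2 * C m ^ 2 - P ^ 2 * C (m + 2 * n + μ + 1) ^ 2) * Q ^ 3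
      + 2 * X * C μ * P ^ 2 * (P - Q) ^ 2 * Q
      + X ^ 2 * P ^ 2 * (P - Q) ^ 2 * (2 * P - Q) := by
  obtain ⟨R, hR0, hR⟩ := exists_bound (W :=
    (∏ k ∈ Finset.range (n + 2), (Hpoly k F * Hpoly k (derivative F) * Hpoly k (derivative F - F)))
    * ∏ k ∈ Finset.range (n + 1), Hpoly k (derivative (derivative F) - derivative F)) (by
    refine mul_ne_zero (Finset.prod_ne_zero_iff.2 fun k hk => ?_)
      (Finset.prod_ne_zero_iff.2 fun k hk => ?_)
    · have hk' : k ≤ n + 1 := by have := Finset.mem_range.1 hk; omega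
      exact mul_ne_zero (mul_ne_zero (hD k hk') (hX k hk')) (hY k hk')
    · exact hB k (by have := Finset.mem_range.1 hk; omega))
  simp only [eval_mul, eval_prod, mul_ne_zero_iff, Finset.prod_ne_zero_iff, Finset.mem_range] at hR
  have sys := fun z (hz : R < z) => sys_point (z := z) hn hF eD0 eD1 eX0 eX1 eY0 eY1 eB
    (fun k hk => ((hR z hz).1 k (by omega)).1.1) (fun k hk => ((hR z hz).1 k (by omega)).1.2)
    (fun k hk => ((hR z hz).1 k (by omega)).2) (fun k hk => (hR z hz).2 k (by omega))
  have id1 : D1 * B = X1 * Y0 - X0 * Y1 := poly_eq_of_large fun z hz => (sys z hz).1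
  have sys2 := fun z (hz : R < z) => (sys z hz).2 (congrArg derivative id1)
  refine ⟨?_, ?_⟩
  · rw [eP]; exact poly_eq_of_large fun z hz => (sys2 z hz).1
  have nQ : ∀ z, R < z → Q.eval z ≠ 0 := by
    intro z hz
    rw [eQ, eval_mul, eD1, eB]
    exact mul_ne_zero ((hR z hz).1 _ (by omega)).1.1 ((hR z hz).2 _ (by omega))
  have nT : ∀ z, R < z → (X0 * Y0).eval z ≠ 0 := by
    intro z hz
    rw [eval_mul, eX0, eY0]
    exact mul_ne_zero ((hR z hz).1 _ (by omega)).1.2 ((hR z hz).1 _ (by omega)).2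
  set S : ℝ[X] := -(D0 * B) with hS
  set T : ℝ[X] := X0 * Y0 with hT
  rw [← eP, ← eQ, ← eN1] at sys2
  have first : ∀ z, R < z → z * (N1.eval z / Q.eval z ^ 2) =
      z * (P.eval z / Q.eval z * (P.eval z / Q.eval z - 1)) * (1 + 2 * (S.eval z / T.eval z))
        - (μ + 2 * n + 1) * (P.eval z / Q.eval z) - m := by
    intro z hz
    obtain ⟨-, u, s, u1, s1, rfl, rfl, rfl, rfl, q, -⟩ := sys2 z hz
    rw [q]; ring
  apply poly_eq_of_large (R := R)
  intro z hz
  obtain ⟨-, u, s, u1, s1, hu, hs, hu1, hs1, q1, q2⟩ := sys2 z hz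
  have du := hasDeriv_ratio P Q (nQ z hz)
  have ds := hasDeriv_ratio S T (nT z hz)
  have ddu := ratio_second P Q (nQ z hz)
  rw [← eN1, ← eN2] at ddu
  rw [← eN1] at du
  have hl := (hasDerivAt_id z).mul ddu
  have hr := ((((hasDerivAt_id z).mul (du.mul (du.sub_const 1))).mul
    ((ds.const_mul 2).const_add 1)).sub (du.const_mul (μ + 2 * n + 1))).sub_const m
  have hev := hr.congr_of_eventuallyEq (f₁ := id * fun t => N1.eval t / Q.eval t ^ 2) (by
    filter_upwards [Ioi_mem_nhds hz] with t ht
    simpa using first t ht)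
  have heq := hl.unique hev
  simp only [id_eq, Pi.mul_apply] at heq
  rw [← hu, ← hs, ← hu1, ← hs1] at heq
  have fin := alg_elim (z := z) (u := u) (u1 := u1) (u2 := N2.eval z / Q.eval z ^ 3) (s := s)
    (s1 := s1) (κ := μ + 2 * n + 1) (m := m) (μ := μ) (n := n) rfl (by rw [q1]; ring) q2
    (by linear_combination heq)
  rw [hu, hu1, ode_poly_eval (nQ z hz)] at fin
  simp only [eval_add, eval_sub, eval_mul, eval_pow, eval_X, eval_C, eval_ofNat]
  linear_combination fin

end FINAL2
/-- rational solution of the second-order equation coming from the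
symmetric fifth Painlevé system `sP_V`. -/
theorem spv_rational_solution (m n : ℕ) (hm : 1 ≤ m) (hn : 1 ≤ n) (μ : ℝ) (u : ℝ → ℝ)
    (hu : u = fun z =>
      -(genLag (m : ℤ) n μ z * genLag ((m : ℤ) - 2) (n + 1) μ z) /
        (genLag ((m : ℤ) - 1) n (μ + 1) z * genLag ((m : ℤ) - 1) (n + 1) (μ - 1) z)) :
    ∀ z : ℝ, z ≠ 0 →
      genLag ((m : ℤ) - 1) n (μ + 1) z * genLag ((m : ℤ) - 1) (n + 1) (μ - 1) z ≠ 0 →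
      u z ≠ 0 → u z ≠ 1 →
      (u z = deriv (fun t => Real.log
          (genLag ((m : ℤ) - 1) (n + 1) (μ - 1) t / genLag ((m : ℤ) - 1) n (μ + 1) t)) z)
      ∧ iteratedDeriv 2 u z
        = (1 / 2) * (1 / u z + 1 / (u z - 1)) * (deriv u z) ^ 2
            - (1 / z) * deriv u z
            + ((u z - 1) ^ 2 * (m : ℝ) ^ 2
                - (u z) ^ 2 * ((m : ℝ) + 2 * n + μ + 1) ^ 2) /
              (2 * z ^ 2 * u z * (u z - 1))
            + μ * u z * (u z - 1) / z
            + u z * (u z - 1) * (2 * u z - 1) / 2 := by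
  obtain ⟨M, hM⟩ : ∃ M, m + n = M + 1 := ⟨m + n - 1, by omega⟩
  obtain ⟨F, hFd⟩ : ∃ F, F = lagP (M + 1) μ := ⟨_, rfl⟩
  have hF1 : Polynomial.derivative F = - lagP M (μ + 1) := by rw [hFd, lagP_derivative]
  have hF2 : Polynomial.derivative (Polynomial.derivative F) - Polynomial.derivative F
      = lagP M (μ + 1 + 1) := by
    rw [hF1, ← lagP_sub M (μ + 1), Polynomial.derivative_neg]; ring
  have hF3 : Polynomial.derivative F - F = - lagP (M + 1) (μ + 1) := by
    rw [← lagP_sub (M + 1) μ, ← hFd]; ring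
  have hode : Polynomial.X * Polynomial.derivative^[2] F +
      (Polynomial.C (μ + 1) - Polynomial.X) * Polynomial.derivative F +
      Polynomial.C ((m : ℝ) + n) * F = 0 := by
    have := lagP_ode (M + 1) μ
    rw [← hFd, ← hM] at this
    push_cast at this
    exact this
  have gA : genLag ((m : ℤ) - 1) (n + 1) (μ - 1) = fun z => (Hpoly (n + 1) F).eval z := by
    rw [genLag_eq _ _ (M + 1) _ (by push_cast; omega), sub_add_cancel, hFd]
  have gB : genLag ((m : ℤ) - 1) n (μ + 1) = fun z => (Hpoly n (Polynomial.derivative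
      (Polynomial.derivative F) - Polynomial.derivative F)).eval z := by
    rw [genLag_eq _ _ M _ (by omega), hF2]
  have gY : genLag (m : ℤ) n μ = fun z => (-1) ^ n *
      (Hpoly n (Polynomial.derivative F - F)).eval z := by
    rw [genLag_eq _ _ (M + 1) _ (by push_cast; omega), ← neg_neg (lagP (M + 1) (μ + 1)), ← hF3,
      Hpoly_neg]
    simp
  have gX : genLag ((m : ℤ) - 2) (n + 1) μ = fun z => (-1) ^ (n + 1) *
      (Hpoly (n + 1) (Polynomial.derivative F)).eval z := by
    rw [genLag_eq _ _ M _ (by push_cast; omega), ← neg_neg (lagP M (μ + 1)), ← hF1, Hpoly_neg]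
    simp
  obtain ⟨A, hA⟩ : ∃ A, A = Hpoly (n + 1) F := ⟨_, rfl⟩
  obtain ⟨B, hB⟩ : ∃ B, B = Hpoly n (Polynomial.derivative
      (Polynomial.derivative F) - Polynomial.derivative F) := ⟨_, rfl⟩
  obtain ⟨Y, hY⟩ : ∃ Y, Y = Hpoly n (Polynomial.derivative F - F) := ⟨_, rfl⟩
  obtain ⟨X', hX⟩ : ∃ X', X' = Hpoly (n + 1) (Polynomial.derivative F) := ⟨_, rfl⟩
  obtain ⟨id1, id2⟩ := poly_main (m := (m : ℝ)) (μ := μ) hn hode rfl hA rfl hX hY rfl hB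
    (fun k hk => Hpoly_ne_zero (N := M + 1) (by rw [hFd]; exact lagP_ne _ _)
      (by rw [hFd]; exact lagP_natDegree _ _) (by omega))
    (fun k hk => Hpoly_ne_zero (N := M) (by rw [hF1]; exact neg_ne_zero.2 (lagP_ne _ _))
      (by rw [hF1, Polynomial.natDegree_neg]; exact lagP_natDegree _ _) (by omega))
    (fun k hk => Hpoly_ne_zero (N := M + 1) (by rw [hF3]; exact neg_ne_zero.2 (lagP_ne _ _))
      (by rw [hF3, Polynomial.natDegree_neg]; exact lagP_natDegree _ _) (by omega))
    (fun k hk => Hpoly_ne_zero (N := M) (by rw [hF2]; exact lagP_ne _ _)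
      (by rw [hF2]; exact lagP_natDegree _ _) (by omega))
    rfl rfl rfl rfl
  rw [← hA] at gA
  rw [← hB] at gB
  rw [← hY] at gY
  rw [← hX] at gX
  obtain ⟨P, hP⟩ : ∃ P, P = X' * Y := ⟨_, rfl⟩
  obtain ⟨Q, hQ⟩ : ∃ Q, Q = A * B := ⟨_, rfl⟩
  rw [← hP] at id1
  rw [← hP, ← hQ] at id2
  have hu2 : u = fun z => P.eval z / Q.eval z := by
    rw [hu, gA, gB, gY, gX]
    funext z
    have hsq : ((-1 : ℝ) ^ n) * (-1) ^ n = 1 := by rw [← mul_pow]; norm_num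
    rw [hP, hQ, Polynomial.eval_mul, Polynomial.eval_mul, mul_comm (Polynomial.eval z B)]
    congr 1
    linear_combination Polynomial.eval z X' * Polynomial.eval z Y * hsq
  intro z hz hne h0 h1
  rw [gA, gB] at hne
  obtain ⟨nB, nA⟩ := mul_ne_zero_iff.1 hne
  simp only at nA nB
  have nQ : Q.eval z ≠ 0 := by rw [hQ, Polynomial.eval_mul]; exact mul_ne_zero nA nB
  refine ⟨?_, ?_⟩
  · have hd := (hasDeriv_ratio A B nB).log (div_ne_zero nA nB)
    rw [gA, gB, hd.deriv, hu2, id1, hQ]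
    simp only [Polynomial.eval_mul]
    field_simp
  · have dfirst : ∀ t, Q.eval t ≠ 0 → deriv u t = (Polynomial.derivative P * Q
        - P * Polynomial.derivative Q).eval t / (Q.eval t) ^ 2 := by
      intro t ht
      rw [hu2]
      exact (hasDeriv_ratio P Q ht).deriv
    have hev : deriv u =ᶠ[nhds z] fun t => (Polynomial.derivative P * Q
        - P * Polynomial.derivative Q).eval t / (Q.eval t) ^ 2 := by
      have := Q.continuous.continuousAt.eventually_ne nQ
      filter_upwards [this] with t ht
      exact dfirst t ht
    have h2 := ((ratio_second P Q nQ).congr_of_eventuallyEq hev).deriv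
    have h2' : iteratedDeriv 2 u z = deriv (deriv u) z := by
      rw [iteratedDeriv_succ, iteratedDeriv_one]
    rw [← h2'] at h2
    have hd1 := dfirst z nQ
    obtain ⟨N1, hN1⟩ : ∃ N1, N1 = Polynomial.derivative P * Q - P * Polynomial.derivative Q :=
      ⟨_, rfl⟩
    rw [← hN1] at h2 hd1 id2
    obtain ⟨N2, hN2⟩ : ∃ N2, N2 = Polynomial.derivative N1 * Q
      - 2 * N1 * Polynomial.derivative Q := ⟨_, rfl⟩
    rw [← hN2] at h2 id2
    have huz : u z = P.eval z / Q.eval z := by rw [hu2]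
    have h3 := congrArg (Polynomial.eval z) id2
    simp only [Polynomial.eval_add, Polynomial.eval_sub, Polynomial.eval_mul, Polynomial.eval_pow,
      Polynomial.eval_X, Polynomial.eval_C, Polynomial.eval_ofNat] at h3
    have h4 := (ode_poly_eval (z := z) (m := (m : ℝ)) (k := (m : ℝ) + 2 * n + μ + 1) (μ := μ)
      (p := P.eval z) (q := Q.eval z) (n1 := N1.eval z) (n2 := N2.eval z) nQ).2 h3
    rw [← huz, ← hd1, ← h2] at h4
    have h1' : u z - 1 ≠ 0 := sub_ne_zero.2 h1
    generalize u z = w at *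
    generalize deriv u z = w1 at *
    generalize iteratedDeriv 2 u z = w2 at *
    field_simp
    linear_combination h4
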